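/- arXiv:2402.10281 — 9 statements merged into one kernel-verified Lean document; each statement's English description precedes it below -/
import Mathlib

section
/- Let V and Q be real Hilbert spaces and let b : V × Q → ℝ be a bilinear form for which there exist constants M < ∞ and m > 0 such that |b(v,q)| ≤ M·‖v‖_V·‖q‖_Q for all v ∈ V, q ∈ Q, and m·‖q‖_Q ≤ sup_{v ∈ V, v ≠ 0} b(v,q)/‖v‖_V for all q ∈ Q. Let F : V → ℝ be a continuous linear functional satisfying the compatibility condition F(v) = 0 for all v ∈ V₀ := { v ∈ V : b(v,q) = 0 for all q ∈ Q }. Then there exists a unique u ∈ Q such that b(v,u) = F(v) for all v ∈ V, and this u satisfies ‖u‖_Q ≤ (1/m)·‖F‖_{V*}. -/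
/-!
The form `b` is represented by a bounded operator `A : Q → V` with `⟪A q, v⟫ = b v q`. The inf-sup
condition says `m * ‖q‖ ≤ ‖A q‖`, so `A` is injective with closed range. Any `w` orthogonal to that
range satisfies `b w q = 0` for all `q`, so `F w = 0` by compatibility; hence the Riesz
representative of `F` lies in `(range A)ᗮᗮ = range A`. A preimage of it is the solution, and the
norm bound is again the inf-sup condition.
-/

/-- The usable form of the inf-sup condition. Nonnegativity of `C` covers `V = 0`, where the
supremum is over an empty type and equals `0`. -/
theorem mul_norm_le_of_infsup {V Q : Type*} [NormedAddCommGroup V] [InnerProductSpace ℝ V]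
    [NormedAddCommGroup Q] [InnerProductSpace ℝ Q]
    (b : V →ₗ[ℝ] Q →ₗ[ℝ] ℝ) (m : ℝ) (q : Q)
    (hinfsup : m * ‖q‖ ≤ ⨆ v : {v : V // v ≠ 0}, b v.1 q / ‖v.1‖)
    (C : ℝ) (hC : 0 ≤ C) (h : ∀ v : V, b v q ≤ C * ‖v‖) : m * ‖q‖ ≤ C := by
  refine hinfsup.trans (Real.iSup_le (fun v => ?_) hC)
  exact (div_le_iff₀ (norm_pos_iff.2 v.2)).2 (h v.1)

/-- Existence, uniqueness and stability for the abstract mixed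
variational problem `b(v,u) = F(v)` under the sup-sup (continuity) and inf-sup
conditions and the compatibility condition on the data `F`. -/
theorem stmt0
    {V Q : Type*} [NormedAddCommGroup V] [InnerProductSpace ℝ V] [CompleteSpace V]
    [NormedAddCommGroup Q] [InnerProductSpace ℝ Q] [CompleteSpace Q]
    (b : V →ₗ[ℝ] Q →ₗ[ℝ] ℝ) (M m : ℝ) (hm : 0 < m)
    (hbound : ∀ (v : V) (q : Q), |b v q| ≤ M * ‖v‖ * ‖q‖)
    (hinfsup : ∀ q : Q, m * ‖q‖ ≤ ⨆ v : {v : V // v ≠ 0}, b v.1 q / ‖v.1‖)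
    (F : V →L[ℝ] ℝ)
    (hcompat : ∀ v : V, (∀ q : Q, b v q = 0) → F v = 0) :
    ∃ u : Q, (∀ v : V, b v u = F v) ∧ ‖u‖ ≤ (1 / m) * ‖F‖ ∧
      ∀ u' : Q, (∀ v : V, b v u' = F v) → u' = u := by
  let B : V →L[ℝ] Q →L[ℝ] ℝ := b.mkContinuous₂ M hbound
  let L : Q →ₗ[ℝ] V :=
    { toFun := fun q => (InnerProductSpace.toDual ℝ V).symm (B.flip q)
      map_add' := fun x y => by simp
      map_smul' := fun c x => by simp }
  have hL : ∀ q v, inner ℝ (L q) v = b v q := fun q v => by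
    simp [L, B]
  let A : Q →L[ℝ] V := L.mkContinuous ‖B.flip‖ fun q => by
    simpa [L] using B.flip.le_opNorm q
  have hA : ∀ q v, inner ℝ (A q) v = b v q := hL
  have hlow : ∀ q, m * ‖q‖ ≤ ‖A q‖ := fun q =>
    mul_norm_le_of_infsup b m q (hinfsup q) _ (norm_nonneg _) fun v => by
      rw [← hA]; exact real_inner_le_norm _ _
  have hanti : AntilipschitzWith (Real.toNNReal m⁻¹) A := A.antilipschitz_of_bound fun q => by
    rw [Real.coe_toNNReal _ (inv_pos.2 hm).le, inv_mul_eq_div, le_div_iff₀ hm, mul_comm]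
    exact hlow q
  have hclosed : IsClosed (A.range : Set V) := by
    exact hanti.isClosed_range A.uniformContinuous
  have : CompleteSpace A.range := hclosed.completeSpace_coe
  have hmem : (InnerProductSpace.toDual ℝ V).symm F ∈ A.range := by
    rw [← Submodule.orthogonal_orthogonal A.range, Submodule.mem_orthogonal']
    intro w hw
    rw [InnerProductSpace.toDual_symm_apply]
    refine hcompat w fun q => ?_
    rw [← hA]
    exact (Submodule.mem_orthogonal _ _).1 hw _ ⟨q, rfl⟩
  obtain ⟨u, hu⟩ := hmem
  have hu' : A u = (InnerProductSpace.toDual ℝ V).symm F := hu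
  refine ⟨u, fun v => ?_, ?_, fun u' h' => hanti.injective ?_⟩
  · rw [← hA, hu', InnerProductSpace.toDual_symm_apply]
  · have h := hlow u
    rw [hu', LinearIsometryEquiv.norm_map] at h
    rw [one_div, inv_mul_eq_div, le_div_iff₀ hm, mul_comm]
    exact h
  · refine ext_inner_right ℝ fun v => ?_
    rw [hA, h', hu', InnerProductSpace.toDual_symm_apply]
end

section
/- Let V and Q be real Hilbert spaces, b : V × Q → ℝ a continuous bilinear form, and F : V → ℝ a continuous linear functional satisfying the compatibility condition F(v) = 0 for all v ∈ V₀ := { v ∈ V : b(v,q) = 0 for all q ∈ Q }. Then a pair (w,u) ∈ V × Q satisfies both ⟨w,v⟩_V + b(v,u) = F(v) for all v ∈ V and b(w,q) = 0 for all q ∈ Q if and only if w = 0 and b(v,u) = F(v) for all v ∈ V. -/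
open RealInnerProductSpace

/-- Equivalence of the mixed problem and its saddle point
reformulation: `(w,u)` solves the saddle point system iff `w = 0` and `u`
solves the mixed problem `b(v,u) = F(v)`. -/
theorem stmt1
    {V Q : Type*} [NormedAddCommGroup V] [InnerProductSpace ℝ V] [CompleteSpace V]
    [NormedAddCommGroup Q] [InnerProductSpace ℝ Q] [CompleteSpace Q]
    (b : V →L[ℝ] Q →L[ℝ] ℝ) (F : V →L[ℝ] ℝ)
    (hcompat : ∀ v : V, (∀ q : Q, b v q = 0) → F v = 0)
    (w : V) (u : Q) :
    ((∀ v : V, ⟪w, v⟫ + b v u = F v) ∧ (∀ q : Q, b w q = 0)) ↔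
      (w = 0 ∧ ∀ v : V, b v u = F v) := by
  constructor
  · rintro ⟨h, hw⟩
    -- Test with `v = w`: both `b w u` and, by compatibility, `F w` vanish, so `⟪w, w⟫ = 0`.
    have hw0 : w = 0 := by
      have h1 := h w
      rw [hw u, hcompat w hw, add_zero] at h1
      exact inner_self_eq_zero.mp h1
    subst hw0
    exact ⟨rfl, fun v => by simpa using h v⟩
  · rintro ⟨rfl, h⟩
    exact ⟨fun v => by simpa using h v, fun q => by simp⟩
end

section
/- Let u ∈ C¹([0,1]) and set ū := ∫_0^1 u(s) ds. Define Tu : [0,1] → ℝ by (Tu)(x) = x·ū − ∫_0^x u(s) ds. Then: (a) Tu(0) = Tu(1) = 0; (b) (Tu)′(x) = ū − u(x) for all x ∈ [0,1]; (c) for every v ∈ C¹([0,1]) with v(0) = v(1) = 0 one has ∫_0^1 (Tu)′(x)·v′(x) dx = ∫_0^1 u′(x)·v(x) dx; and (d) ∫_0^1 ((Tu)′(x))² dx = ∫_0^1 u(x)² dx − ū². -/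
/-!
Part (b) is the fundamental theorem of calculus for the continuous function `u`, in its one-sided
form at the endpoints. Part (c) is integration by parts for `ū - u` against `v`: the boundary terms
vanish with `v`, and `(ū - u)' = -u'`. Part (d) expands the square and uses `∫ u = ū`.
-/

/-- Properties of the representation operator `T` of the
convection term: for `u ∈ C¹([0,1])` and `(Tu)(x) = x·ū - ∫_0^x u`,
(a) `Tu` vanishes at the endpoints, (b) `(Tu)' = ū - u` on `[0,1]`,
(c) `∫ (Tu)' v' = ∫ u' v` for all `v ∈ C¹([0,1])` with `v(0)=v(1)=0`, and
(d) `∫ ((Tu)')² = ∫ u² - ū²`. -/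
theorem stmt4 (u u' : ℝ → ℝ)
    (hu : ∀ x ∈ Set.Icc (0:ℝ) 1, HasDerivWithinAt u (u' x) (Set.Icc 0 1) x)
    (hu' : ContinuousOn u' (Set.Icc 0 1))
    (ubar : ℝ) (hubar : ubar = ∫ s in (0:ℝ)..1, u s)
    (Tu : ℝ → ℝ) (hT : ∀ x : ℝ, Tu x = x * ubar - ∫ s in (0:ℝ)..x, u s) :
    (Tu 0 = 0 ∧ Tu 1 = 0) ∧
    (∀ x ∈ Set.Icc (0:ℝ) 1, HasDerivWithinAt Tu (ubar - u x) (Set.Icc 0 1) x) ∧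
    (∀ v v' : ℝ → ℝ,
      (∀ x ∈ Set.Icc (0:ℝ) 1, HasDerivWithinAt v (v' x) (Set.Icc 0 1) x) →
      ContinuousOn v' (Set.Icc 0 1) → v 0 = 0 → v 1 = 0 →
      ∫ x in (0:ℝ)..1, (ubar - u x) * v' x = ∫ x in (0:ℝ)..1, u' x * v x) ∧
    (∫ x in (0:ℝ)..1, (ubar - u x)^2 = (∫ x in (0:ℝ)..1, (u x)^2) - ubar^2) := by
  have hcu : ContinuousOn u (Set.Icc 0 1) := fun x hx => (hu x hx).continuousWithinAt
  have hiu : IntervalIntegrable u MeasureTheory.volume 0 1 :=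
    hcu.intervalIntegrable_of_Icc zero_le_one
  refine ⟨⟨by simp [hT], by simp [hT, ← hubar]⟩, ?_, ?_, ?_⟩
  · intro x hx
    -- The instance `FTCFilter x (𝓝[Icc 0 1] x) _` is found through this `Fact`.
    haveI : Fact (x ∈ Set.Icc (0:ℝ) 1) := ⟨hx⟩
    have hix : IntervalIntegrable u MeasureTheory.volume 0 x :=
      (hcu.mono (Set.Icc_subset_Icc_right hx.2)).intervalIntegrable_of_Icc hx.1
    have hF : HasDerivWithinAt (fun y => ∫ s in (0:ℝ)..y, u s) (u x) (Set.Icc 0 1) x :=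
      intervalIntegral.integral_hasDerivWithinAt_right hix
        (hcu.stronglyMeasurableAtFilter_nhdsWithin measurableSet_Icc x) (hcu x hx)
    have hlin : HasDerivWithinAt (fun y : ℝ => y * ubar) ubar (Set.Icc 0 1) x := by
      simpa using (hasDerivWithinAt_id x (Set.Icc (0:ℝ) 1)).mul_const ubar
    exact (hlin.sub hF).congr (fun y _ => hT y) (hT x)
  · intro v v' hv hv' hv0 hv1
    have hparts := intervalIntegral.integral_mul_deriv_eq_deriv_mul_of_hasDerivWithinAt
      (a := 0) (b := 1) (u := fun x => ubar - u x) (u' := fun x => -u' x) (v := v) (v' := v')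
      (by rw [Set.uIcc_of_le zero_le_one]; exact fun x hx => (hu x hx).const_sub ubar)
      (by rw [Set.uIcc_of_le zero_le_one]; exact hv)
      (hu'.neg.intervalIntegrable_of_Icc zero_le_one)
      (hv'.intervalIntegrable_of_Icc zero_le_one)
    simpa [hv0, hv1] using hparts
  · have hiu2 : IntervalIntegrable (fun x => u x ^ 2) MeasureTheory.volume 0 1 :=
      (hcu.pow 2).intervalIntegrable_of_Icc zero_le_one
    have hexp : ∀ x, (ubar - u x) ^ 2 = ubar ^ 2 - 2 * ubar * u x + u x ^ 2 := fun x => by ring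
    simp only [hexp]
    rw [intervalIntegral.integral_add (intervalIntegrable_const.sub (hiu.const_mul _)) hiu2,
      intervalIntegral.integral_sub intervalIntegrable_const (hiu.const_mul _),
      intervalIntegral.integral_const_mul, ← hubar, intervalIntegral.integral_const, smul_eq_mul]
    ring
end

section
/- Fix an integer n ≥ 2 and set h = 1/n and x_i = i·h (i = 0,…,n). Let M_h denote the space of continuous functions v : [0,1] → ℝ with v(0) = v(1) = 0 that are affine on each subinterval [x_{i−1}, x_i]. Then for every u ∈ C¹([0,1]): sup { ( ∫_0^1 u′(x)v(x) dx )² / ∫_0^1 (v′(x))² dx : v ∈ M_h, v not identically zero } = (1/n)·Σ_{i=1}^n ( (1/h)·∫_{x_{i−1}}^{x_i} u(x) dx )² − ( ∫_0^1 u(x) dx )². -/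
/-!
On the `i`-th cell `[i/n, (i+1)/n]` let `a i` be the slope of `v ∈ M_h` and `U i` the integral of `u`.
Integrating by parts cell by cell, the boundary terms telescope and `∫ u' v = -∑ a i * U i`, while
`∫ (v')² = (1/n) ∑ (a i)²`. The condition `v 0 = v 1 = 0` says exactly that `∑ a i = 0`
(`sum_slopes`, `integral_mul_eq`, `integral_deriv_sq`).

With `m` the mean of the `U i`, the right-hand side of the theorem is `n ∑ (U i - m)²`
(`sigmaSq_eq`), and `∑ a i * U i = ∑ a i * (U i - m)` since the slopes have sum zero. The
Cauchy–Schwarz inequality therefore bounds every quotient by the right-hand side, with equality for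
`a i = U i - m`. If all `U i - m` vanish, every quotient is `0` and it only remains to note that
`M_h` contains a nonzero function, which is where `2 ≤ n` enters.
-/

/-- The space `M_h` of continuous piecewise linear functions on the uniform
mesh `x_i = i/n` of `[0,1]` vanishing at both endpoints. -/
def InMh (n : ℕ) (v : ℝ → ℝ) : Prop :=
  ContinuousOn v (Set.Icc 0 1) ∧ v 0 = 0 ∧ v 1 = 0 ∧
    ∀ i : ℕ, 1 ≤ i → i ≤ n →
      ∃ a c : ℝ, ∀ x ∈ Set.Icc (((i : ℝ) - 1) / n) ((i : ℝ) / n), v x = a * x + c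

/-- The square of the discrete seminorm `|u|_{*,h} = |P_h T u|`:
`σ(u)² = (1/n) Σ_{i=1}^n ((1/h) ∫_{x_{i-1}}^{x_i} u)² - (∫_0^1 u)²`. -/
noncomputable def sigmaSq (n : ℕ) (w : ℝ → ℝ) : ℝ :=
  (1 / (n : ℝ)) * ∑ i ∈ Finset.range n,
      ((n : ℝ) * ∫ x in ((i : ℝ) / n)..(((i : ℝ) + 1) / n), w x) ^ 2
    - (∫ x in (0:ℝ)..1, w x) ^ 2

/-- `v` is affine with slope `a i` and constant term `c i` on the cell `[i/n, (i+1)/n]`, `i < n`. -/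
def IsAffineOnCells (n : ℕ) (v : ℝ → ℝ) (a c : ℕ → ℝ) : Prop :=
  ∀ i < n, ∀ x ∈ Set.Icc ((i : ℝ) / n) (((i : ℝ) + 1) / n), v x = a i * x + c i

/-- The integral of `u` over the cell `[i/n, (i+1)/n]`. -/
noncomputable def cellIntegral (n : ℕ) (u : ℝ → ℝ) (i : ℕ) : ℝ :=
  ∫ x in ((i : ℝ) / n)..(((i : ℝ) + 1) / n), u x

lemma cell_le (n i : ℕ) : (i : ℝ) / n ≤ ((i : ℝ) + 1) / n := by
  gcongr; linarith

lemma cell_subset {n i : ℕ} (hi : i < n) :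
    Set.Icc ((i : ℝ) / n) (((i : ℝ) + 1) / n) ⊆ Set.Icc 0 1 := by
  have hn : (0 : ℝ) < n := by exact_mod_cast (by omega : 0 < n)
  have h1 : (i : ℝ) + 1 ≤ n := by exact_mod_cast hi
  apply Set.Icc_subset_Icc
  · positivity
  · rw [div_le_one hn]; exact h1

lemma integral_eq_sum_cells {n : ℕ} (hn : 0 < n) (f : ℝ → ℝ)
    (hf : ∀ i < n, IntervalIntegrable f MeasureTheory.volume ((i : ℝ) / n) (((i : ℝ) + 1) / n)) :
    ∫ x in (0 : ℝ)..1, f x = ∑ i ∈ Finset.range n, cellIntegral n f i := by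
  have hn' : (n : ℝ) ≠ 0 := by positivity
  have h := intervalIntegral.sum_integral_adjacent_intervals (μ := MeasureTheory.volume) (f := f)
    (a := fun k : ℕ => (k : ℝ) / n) (n := n) (by intro k hk; simpa using hf k hk)
  simp only [Nat.cast_zero, zero_div, div_self hn', Nat.cast_add, Nat.cast_one] at h
  rw [← h]; rfl

lemma InMh.exists_slopes {n : ℕ} {v : ℝ → ℝ} (hv : InMh n v) :
    ∃ a c : ℕ → ℝ, IsAffineOnCells n v a c := by
  have h : ∀ i : ℕ, ∃ p : ℝ × ℝ, i < n →
      ∀ x ∈ Set.Icc ((i : ℝ) / n) (((i : ℝ) + 1) / n), v x = p.1 * x + p.2 := by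
    intro i
    by_cases hi : i < n
    · obtain ⟨a, c, h⟩ := hv.2.2.2 (i + 1) (by omega) (by omega)
      refine ⟨(a, c), fun _ x hx => h x ?_⟩
      simpa using hx
    · exact ⟨0, fun h => absurd h hi⟩
  choose p hp using h
  exact ⟨fun i => (p i).1, fun i => (p i).2, fun i hi => hp i hi⟩

lemma sum_slopes {n : ℕ} (hn : 0 < n) {v : ℝ → ℝ} {a c : ℕ → ℝ} (h : IsAffineOnCells n v a c)
    (h0 : v 0 = 0) (h1 : v 1 = 0) : ∑ i ∈ Finset.range n, a i = 0 := by
  have hn' : (n : ℝ) ≠ 0 := by positivity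
  have key : ∀ i ∈ Finset.range n,
      a i = n * v (((i + 1 : ℕ) : ℝ) / n) - n * v ((i : ℝ) / n) := by
    intro i hi
    have hi := Finset.mem_range.1 hi
    have hr := h i hi _ (Set.right_mem_Icc.2 (cell_le n i))
    have hl := h i hi _ (Set.left_mem_Icc.2 (cell_le n i))
    push_cast
    rw [hr, hl]; field_simp; ring
  rw [Finset.sum_congr rfl key, Finset.sum_range_sub (fun i : ℕ => n * v ((i : ℝ) / n))]
  simp [div_self hn', h0, h1]

lemma integral_mul_eq {n : ℕ} (hn : 0 < n) {v : ℝ → ℝ} {a c : ℕ → ℝ}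
    (h : IsAffineOnCells n v a c) (hvc : ContinuousOn v (Set.Icc 0 1))
    (h0 : v 0 = 0) (h1 : v 1 = 0) {u u' : ℝ → ℝ}
    (hu : ∀ x ∈ Set.Icc (0:ℝ) 1, HasDerivWithinAt u (u' x) (Set.Icc 0 1) x)
    (hu' : ContinuousOn u' (Set.Icc 0 1)) :
    ∫ x in (0 : ℝ)..1, u' x * v x = -∑ i ∈ Finset.range n, a i * cellIntegral n u i := by
  have hn' : (n : ℝ) ≠ 0 := by positivity
  rw [integral_eq_sum_cells hn]
  swap
  · intro i hi
    apply ContinuousOn.intervalIntegrable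
    rw [Set.uIcc_of_le (cell_le n i)]
    exact (hu'.mul hvc).mono (cell_subset hi)
  have key : ∀ i ∈ Finset.range n, cellIntegral n (fun x => u' x * v x) i =
      (u (((i + 1 : ℕ) : ℝ) / n) * v (((i + 1 : ℕ) : ℝ) / n) - u ((i : ℝ) / n) * v ((i : ℝ) / n))
        - a i * cellIntegral n u i := by
    intro i hi
    have hi := Finset.mem_range.1 hi
    have hle := cell_le n i
    have hr := h i hi _ (Set.right_mem_Icc.2 hle)
    have hl := h i hi _ (Set.left_mem_Icc.2 hle)
    have hcongr : cellIntegral n (fun x => u' x * v x) i =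
        ∫ x in ((i : ℝ) / n)..(((i : ℝ) + 1) / n), u' x * (a i * x + c i) := by
      apply intervalIntegral.integral_congr
      intro x hx
      rw [Set.uIcc_of_le hle] at hx
      simp only [h i hi x hx]
    have hparts := intervalIntegral.integral_mul_deriv_eq_deriv_mul_of_hasDerivWithinAt
      (a := (i : ℝ) / n) (b := ((i : ℝ) + 1) / n)
      (u := fun x => a i * x + c i) (u' := fun _ => a i) (v := u) (v' := u')
      (fun x _ => by
        simpa using (((hasDerivAt_id x).const_mul (a i)).add_const (c i)).hasDerivWithinAt)
      (fun x hx => by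
        rw [Set.uIcc_of_le hle] at hx ⊢
        exact (hu x (cell_subset hi hx)).mono (cell_subset hi))
      (by simp)
      (by
        apply ContinuousOn.intervalIntegrable
        rw [Set.uIcc_of_le hle]
        exact hu'.mono (cell_subset hi))
    rw [intervalIntegral.integral_const_mul] at hparts
    rw [hcongr]
    simp_rw [mul_comm (u' _)]
    rw [hparts]
    push_cast
    rw [hr, hl]
    unfold cellIntegral
    ring
  rw [Finset.sum_congr rfl key, Finset.sum_sub_distrib,
    Finset.sum_range_sub (fun i : ℕ => u ((i : ℝ) / n) * v ((i : ℝ) / n))]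
  simp [div_self hn', h0, h1]

lemma integral_deriv_sq {n : ℕ} (hn : 0 < n) {v : ℝ → ℝ} {a c : ℕ → ℝ}
    (h : IsAffineOnCells n v a c) :
    ∫ x in (0 : ℝ)..1, (deriv v x) ^ 2 = (1 / n) * ∑ i ∈ Finset.range n, a i ^ 2 := by
  have hn' : (n : ℝ) ≠ 0 := by positivity
  -- The derivative is only controlled in the open cells; the nodes form a null set.
  have hd : ∀ i < n, ∀ x ∈ Set.Ioo ((i : ℝ) / n) (((i : ℝ) + 1) / n), deriv v x = a i := by
    intro i hi x hx
    have : v =ᶠ[nhds x] fun x => a i * x + c i := by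
      filter_upwards [Ioo_mem_nhds hx.1 hx.2] with y hy
      exact h i hi y (Set.Ioo_subset_Icc_self hy)
    rw [this.deriv_eq]
    simp
  have hae : ∀ i < n, ∀ᵐ x ∂MeasureTheory.volume, x ∈ Set.uIoc ((i : ℝ) / n) (((i : ℝ) + 1) / n) →
      (deriv v x) ^ 2 = a i ^ 2 := by
    intro i hi
    have : ∀ᵐ x : ℝ, x ≠ ((i : ℝ) + 1) / n := by
      simp [MeasureTheory.ae_iff]
    filter_upwards [this] with x hx hx'
    rw [Set.uIoc_of_le (cell_le n i)] at hx'
    rw [hd i hi x ⟨hx'.1, lt_of_le_of_ne hx'.2 hx⟩]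
  rw [integral_eq_sum_cells hn, Finset.mul_sum]
  · apply Finset.sum_congr rfl
    intro i hi
    have hi := Finset.mem_range.1 hi
    unfold cellIntegral
    rw [intervalIntegral.integral_congr_ae (hae i hi)]
    rw [intervalIntegral.integral_const, smul_eq_mul]
    ring
  · intro i hi
    refine (intervalIntegrable_const (c := a i ^ 2)).congr_ae ?_
    rw [Filter.EventuallyEq, MeasureTheory.ae_restrict_iff' measurableSet_uIoc]
    filter_upwards [hae i hi] with x hx hx'
    exact (hx hx').symm

/-- The mean of the cell integrals of `u`. -/
noncomputable def cellMean (n : ℕ) (u : ℝ → ℝ) : ℝ :=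
  (∑ i ∈ Finset.range n, cellIntegral n u i) / n

lemma sum_sub_cellMean {n : ℕ} (hn : 0 < n) (u : ℝ → ℝ) :
    ∑ i ∈ Finset.range n, (cellIntegral n u i - cellMean n u) = 0 := by
  have hn' : (n : ℝ) ≠ 0 := by positivity
  rw [Finset.sum_sub_distrib]
  simp only [Finset.sum_const, Finset.card_range, nsmul_eq_mul, cellMean]
  field_simp; ring

lemma sum_mul_sub_cellMean {n : ℕ} (u : ℝ → ℝ) {a : ℕ → ℝ}
    (ha : ∑ i ∈ Finset.range n, a i = 0) :
    ∑ i ∈ Finset.range n, a i * (cellIntegral n u i - cellMean n u) =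
      ∑ i ∈ Finset.range n, a i * cellIntegral n u i := by
  simp_rw [mul_sub]
  rw [Finset.sum_sub_distrib, ← Finset.sum_mul, ha]; ring

lemma sigmaSq_eq {n : ℕ} (hn : 0 < n) {u : ℝ → ℝ} (hu : ContinuousOn u (Set.Icc 0 1)) :
    sigmaSq n u = n * ∑ i ∈ Finset.range n, (cellIntegral n u i - cellMean n u) ^ 2 := by
  have hn' : (n : ℝ) ≠ 0 := by positivity
  unfold sigmaSq
  rw [integral_eq_sum_cells hn]
  swap
  · intro i hi
    apply ContinuousOn.intervalIntegrable
    rw [Set.uIcc_of_le (cell_le n i)]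
    exact hu.mono (cell_subset hi)
  have h1 : ∀ i, (cellIntegral n u i - cellMean n u) ^ 2 =
      cellIntegral n u i ^ 2 - 2 * cellMean n u * cellIntegral n u i + cellMean n u ^ 2 := by
    intro i; ring
  simp_rw [h1, mul_pow]
  rw [Finset.sum_add_distrib, Finset.sum_sub_distrib, ← Finset.mul_sum, ← Finset.mul_sum]
  simp only [Finset.sum_const, Finset.card_range, nsmul_eq_mul, cellMean]
  change 1 / (n : ℝ) * ((n : ℝ) ^ 2 * ∑ i ∈ Finset.range n, cellIntegral n u i ^ 2) - _ = _
  field_simp; ring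

/-- The continuous piecewise affine function vanishing at `0` whose slope on the cell
`[j/n, (j+1)/n]` is `a j`: each summand rises by `a j / n` across the `j`-th cell and is constant on
either side of it. -/
noncomputable def ofSlopes (n : ℕ) (a : ℕ → ℝ) (x : ℝ) : ℝ :=
  ∑ j ∈ Finset.range n, a j * min (max (x - (j : ℝ) / n) 0) (1 / n)

lemma ofSlopes_continuous (n : ℕ) (a : ℕ → ℝ) : Continuous (ofSlopes n a) := by
  unfold ofSlopes; fun_prop

lemma ofSlopes_affine {n : ℕ} (hn : 0 < n) (a : ℕ → ℝ) :
    ∃ c, IsAffineOnCells n (ofSlopes n a) a c := by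
  have hn' : (0 : ℝ) < n := by positivity
  refine ⟨fun i => ∑ j ∈ Finset.range n,
    (if j < i then a j / n else if j = i then - (a i * (i / n)) else 0), fun i hi x hx => ?_⟩
  have hai : a i * x = ∑ j ∈ Finset.range n, if j = i then a i * x else 0 := by
    simp [hi]
  have hp : (0 : ℝ) ≤ 1 / n := by positivity
  rw [ofSlopes, hai, ← Finset.sum_add_distrib]
  apply Finset.sum_congr rfl
  intro j _
  obtain ⟨hx1, hx2⟩ := hx
  rw [add_div] at hx2
  rcases lt_trichotomy j i with hj | hj | hj
  · have : ((j : ℝ) + 1) / n ≤ i / n := by gcongr; exact_mod_cast hj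
    rw [add_div] at this
    rw [min_eq_right (le_max_of_le_left (by linarith))]
    simp [hj, hj.ne]; ring
  · subst hj
    rw [max_eq_left (by linarith), min_eq_left (by linarith)]
    simp; ring
  · have : ((i : ℝ) + 1) / n ≤ j / n := by gcongr; exact_mod_cast hj
    rw [add_div] at this
    rw [max_eq_right (by linarith), min_eq_left hp]
    simp [hj.ne', hj.le]

lemma ofSlopes_zero (n : ℕ) (a : ℕ → ℝ) : ofSlopes n a 0 = 0 := by
  unfold ofSlopes
  apply Finset.sum_eq_zero
  intro j _
  have h1 : (0 : ℝ) ≤ j / n := by positivity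
  have h2 : (0 : ℝ) ≤ 1 / n := by positivity
  rw [max_eq_right (by linarith), min_eq_left h2, mul_zero]

lemma ofSlopes_one {n : ℕ} (hn : 0 < n) {a : ℕ → ℝ} (ha : ∑ i ∈ Finset.range n, a i = 0) :
    ofSlopes n a 1 = 0 := by
  have hn' : (0 : ℝ) < n := by positivity
  have : ofSlopes n a 1 = ∑ j ∈ Finset.range n, a j * (1 / n) := by
    unfold ofSlopes
    apply Finset.sum_congr rfl
    intro j hj
    have h1 : ((j : ℝ) + 1) / n ≤ 1 := by
      rw [div_le_one hn']; exact_mod_cast Finset.mem_range.1 hj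
    rw [add_div] at h1
    rw [min_eq_right (le_max_of_le_left (by linarith))]
  rw [this, ← Finset.sum_mul, ha, zero_mul]

lemma ofSlopes_inMh {n : ℕ} (hn : 0 < n) {a : ℕ → ℝ} (ha : ∑ i ∈ Finset.range n, a i = 0) :
    InMh n (ofSlopes n a) := by
  refine ⟨(ofSlopes_continuous n a).continuousOn, ofSlopes_zero n a, ofSlopes_one hn ha, ?_⟩
  intro i hi1 hin
  obtain ⟨c, hc⟩ := ofSlopes_affine hn a
  obtain ⟨k, rfl⟩ : ∃ k, i = k + 1 := ⟨i - 1, by omega⟩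
  refine ⟨a k, c k, fun x hx => hc k (by omega) x ?_⟩
  simpa using hx

lemma IsAffineOnCells.exists_ne_zero {n : ℕ} {v : ℝ → ℝ} {a c : ℕ → ℝ}
    (h : IsAffineOnCells n v a c) {i : ℕ} (hi : i < n) (hai : a i ≠ 0) :
    ∃ x ∈ Set.Icc (0 : ℝ) 1, v x ≠ 0 := by
  have hn' : (0 : ℝ) < n := by exact_mod_cast (by omega : 0 < n)
  by_contra! hv
  have hle := cell_le n i
  have hr := h i hi _ (Set.right_mem_Icc.2 hle)
  have hl := h i hi _ (Set.left_mem_Icc.2 hle)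
  rw [hv _ (cell_subset hi (Set.right_mem_Icc.2 hle))] at hr
  rw [hv _ (cell_subset hi (Set.left_mem_Icc.2 hle))] at hl
  have : a i * (1 / n) = 0 := by rw [add_div] at hr; linarith
  rcases mul_eq_zero.1 this with h | h
  · exact hai h
  · have : (0 : ℝ) < 1 / n := by positivity
    linarith

/-- The Cauchy–Schwarz bound. It also covers a vanishing denominator, where the quotient is `0`. -/
lemma quotient_le {n : ℕ} (hn : 0 < n) {v u u' : ℝ → ℝ} (hv : InMh n v)
    (hu : ∀ x ∈ Set.Icc (0:ℝ) 1, HasDerivWithinAt u (u' x) (Set.Icc 0 1) x)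
    (hu' : ContinuousOn u' (Set.Icc 0 1)) :
    (∫ x in (0:ℝ)..1, u' x * v x)^2 / ∫ x in (0:ℝ)..1, (deriv v x)^2 ≤ sigmaSq n u := by
  have hn' : (0 : ℝ) < n := by positivity
  obtain ⟨a, c, h⟩ := hv.exists_slopes
  have huc : ContinuousOn u (Set.Icc 0 1) := fun x hx => (hu x hx).continuousWithinAt
  rw [integral_mul_eq hn h hv.1 hv.2.1 hv.2.2.1 hu hu', integral_deriv_sq hn h, sigmaSq_eq hn huc,
    ← sum_mul_sub_cellMean u (sum_slopes hn h hv.2.1 hv.2.2.1), neg_sq]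
  apply div_le_of_le_mul₀ (by positivity) (by positivity)
  refine (Finset.sum_mul_sq_le_sq_mul_sq _ _ _).trans (le_of_eq ?_)
  field_simp

/-- The space `M_h` contains a nonzero function: the hat with slopes `1, -1` on the first two
cells. -/
lemma exists_nonzero {n : ℕ} (hn : 2 ≤ n) :
    ∃ v, InMh n v ∧ ∃ x ∈ Set.Icc (0 : ℝ) 1, v x ≠ 0 := by
  let a : ℕ → ℝ := fun i => if i = 0 then 1 else if i = 1 then -1 else 0
  have ha : ∑ i ∈ Finset.range n, a i = 0 := by
    obtain ⟨k, rfl⟩ : ∃ k, n = k + 2 := ⟨n - 2, by omega⟩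
    rw [Finset.sum_range_succ', Finset.sum_range_succ']
    simp [a]
  obtain ⟨c, hc⟩ := ofSlopes_affine (by omega : 0 < n) a
  exact ⟨_, ofSlopes_inMh (by omega) ha, hc.exists_ne_zero (i := 0) (by omega) (by simp [a])⟩

/-- Explicit representation of `|P_h T u|²`, the squared energy
norm of the elliptic projection of `Tu` onto the piecewise linear space `M_h`:
`sup_{v ∈ M_h, v ≠ 0} (∫ u'v)²/∫(v')² = (1/n)Σ_i((1/h)∫_{x_{i-1}}^{x_i}u)² - (∫_0^1 u)²`. -/
theorem stmt6 (n : ℕ) (hn : 2 ≤ n) (u u' : ℝ → ℝ)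
    (hu : ∀ x ∈ Set.Icc (0:ℝ) 1, HasDerivWithinAt u (u' x) (Set.Icc 0 1) x)
    (hu' : ContinuousOn u' (Set.Icc 0 1)) :
    sSup { r : ℝ | ∃ v : ℝ → ℝ, InMh n v ∧ (∃ x ∈ Set.Icc (0:ℝ) 1, v x ≠ 0) ∧
        r = (∫ x in (0:ℝ)..1, u' x * v x)^2 / ∫ x in (0:ℝ)..1, (deriv v x)^2 } =
      sigmaSq n u := by
  have hn0 : 0 < n := by omega
  have hn' : (0 : ℝ) < n := by positivity
  have huc : ContinuousOn u (Set.Icc 0 1) := fun x hx => (hu x hx).continuousWithinAt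
  apply IsGreatest.csSup_eq
  refine ⟨?_, ?_⟩
  swap
  · rintro r ⟨v, hv, -, rfl⟩
    exact quotient_le hn0 hv hu hu'
  by_cases hz : ∀ i < n, cellIntegral n u i - cellMean n u = 0
  · -- All cell integrals agree, so the right-hand side is zero and any nonzero `v` attains it.
    have hs : sigmaSq n u = 0 := by
      rw [sigmaSq_eq hn0 huc, Finset.sum_eq_zero, mul_zero]
      intro i hi
      rw [hz i (Finset.mem_range.1 hi)]; ring
    obtain ⟨v, hv, hv0⟩ := exists_nonzero hn
    refine ⟨v, hv, hv0, le_antisymm ?_ (quotient_le hn0 hv hu hu')⟩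
    obtain ⟨a, c, h⟩ := hv.exists_slopes
    rw [hs, integral_deriv_sq hn0 h]
    positivity
  · push Not at hz
    obtain ⟨i, hi, hai⟩ := hz
    have ha := sum_sub_cellMean hn0 u
    obtain ⟨c, hc⟩ := ofSlopes_affine hn0 (fun i => cellIntegral n u i - cellMean n u)
    have hv := ofSlopes_inMh hn0 ha
    refine ⟨_, hv, hc.exists_ne_zero hi hai, ?_⟩
    rw [integral_mul_eq hn0 hc hv.1 hv.2.1 hv.2.2.1 hu hu', integral_deriv_sq hn0 hc,
      sigmaSq_eq hn0 huc, ← sum_mul_sub_cellMean u ha, neg_sq]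
    have hpos : 0 < ∑ i ∈ Finset.range n, (cellIntegral n u i - cellMean n u) ^ 2 :=
      Finset.sum_pos' (fun _ _ => sq_nonneg _) ⟨i, Finset.mem_range.2 hi, by positivity⟩
    simp_rw [← sq]
    field_simp
end

section
/- Fix an integer n ≥ 1 and set h = 1/n and x_i = i·h (i = 0,…,n). For an integrable u : [0,1] → ℝ set σ(u)² := (1/n)·Σ_{i=1}^n ( (1/h)·∫_{x_{i−1}}^{x_i} u(x) dx )² − ( ∫_0^1 u(x) dx )², and set ū := ∫_0^1 u(x) dx. Then for every u ∈ C¹([0,1]): ∫_0^1 (u(x) − ū)² dx − (h²/π²)·∫_0^1 (u′(x))² dx ≤ σ(u)² ≤ ∫_0^1 u(x)² dx. -/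
/-- Poincaré–Wirtinger for a function whose primitive `F` vanishes at both endpoints, with a
constant `k` below the sharp value so that the tangent in the auxiliary function is smooth. -/
lemma wirtinger_aux {a b k : ℝ} (hab : a < b) (hk0 : 0 ≤ k) (hk : k * (b - a) < Real.pi)
    {F v v' : ℝ → ℝ} (hFc : ContinuousOn F (Set.Icc a b))
    (hF : ∀ x ∈ Set.Ioo a b, HasDerivAt F (v x) x) (hFa : F a = 0) (hFb : F b = 0)
    (hvc : ContinuousOn v (Set.Icc a b)) (hv : ∀ x ∈ Set.Ioo a b, HasDerivAt v (v' x) x)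
    (hv' : ContinuousOn v' (Set.Icc a b)) :
    k ^ 2 * ∫ x in a..b, v x ^ 2 ≤ ∫ x in a..b, v' x ^ 2 := by
  have hcos : ∀ x ∈ Set.Icc a b, Real.cos (k * (x - (a + b) / 2)) ≠ 0 := by
    intro x hx
    apply ne_of_gt
    apply Real.cos_pos_of_mem_Ioo
    constructor
    · nlinarith [mul_nonneg hk0 (sub_nonneg.2 hx.1)]
    · nlinarith [mul_nonneg hk0 (sub_nonneg.2 hx.2)]
  have htc : ContinuousOn (fun x => Real.tan (k * (x - (a + b) / 2))) (Set.Icc a b) := by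
    intro x hx
    have h1 := (Real.continuousAt_tan.2 (hcos x hx))
    exact (ContinuousAt.comp (f := fun x => k * (x - (a + b) / 2)) h1
      (by fun_prop)).continuousWithinAt
  set t : ℝ → ℝ := fun x => Real.tan (k * (x - (a + b) / 2)) with ht
  have htd : ∀ x ∈ Set.Ioo a b, HasDerivAt t (k * (1 + t x ^ 2)) x := by
    intro x hx
    have hc := hcos x ⟨hx.1.le, hx.2.le⟩
    have h1 := Real.hasDerivAt_tan hc
    have h2 : HasDerivAt (fun x => k * (x - (a + b) / 2)) (k * 1) x :=
      ((hasDerivAt_id x).sub_const _).const_mul k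
    have h3 := HasDerivAt.comp x h1 h2
    refine h3.congr_deriv ?_
    have h4 := Real.inv_one_add_tan_sq hc
    rw [← h4]
    simp only [ht, one_div, inv_inv]
    ring
  have key := intervalIntegral.sub_le_integral_of_hasDeriv_right_of_le hab.le
    (g := fun x => -(2 * k ^ 2 * (F x * v x) + k ^ 3 * (F x ^ 2 * t x)))
    (g' := fun x => -(2 * k ^ 2 * (v x * v x + F x * v' x)
      + k ^ 3 * ((2 * F x * v x) * t x + F x ^ 2 * (k * (1 + t x ^ 2)))))
    (φ := fun x => v' x ^ 2 - k ^ 2 * v x ^ 2)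
    (by fun_prop) ?_ ?_ ?_
  · rw [intervalIntegral.integral_sub, intervalIntegral.integral_const_mul] at key
    · simp only [hFa, hFb] at key
      norm_num at key
      linarith
    · exact ContinuousOn.intervalIntegrable_of_Icc hab.le (by fun_prop)
    · exact ContinuousOn.intervalIntegrable_of_Icc hab.le (by fun_prop)
  · intro x hx
    have h1 := ((hF x hx).mul (hv x hx)).const_mul (2 * k ^ 2)
    have h2 := (((hF x hx).pow 2).mul (htd x hx)).const_mul (k ^ 3)
    have h3 := (h1.add h2).neg.hasDerivWithinAt (s := Set.Ioi x)
    refine HasDerivWithinAt.congr_deriv h3 ?_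
    simp
  · exact ContinuousOn.integrableOn_Icc (by fun_prop)
  · intro x _
    nlinarith [sq_nonneg (v' x + k ^ 2 * F x), sq_nonneg (k * (v x + k * F x * t x))]

lemma integral_sub_const_sq {a b m : ℝ} (hab : a ≤ b) {u : ℝ → ℝ}
    (hu : ContinuousOn u (Set.Icc a b)) :
    ∫ x in a..b, (u x - m) ^ 2
      = (∫ x in a..b, u x ^ 2) - 2 * m * (∫ x in a..b, u x) + m ^ 2 * (b - a) := by
  have h : ∀ x, (u x - m) ^ 2 = u x ^ 2 - 2 * m * u x + m ^ 2 := fun x => by ring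
  simp_rw [h]
  rw [intervalIntegral.integral_add, intervalIntegral.integral_sub,
    intervalIntegral.integral_const_mul, intervalIntegral.integral_const]
  · simp only [smul_eq_mul]; ring
  all_goals exact ContinuousOn.intervalIntegrable_of_Icc hab (by fun_prop)

lemma integral_sub_mean_sq {a b : ℝ} (hab : a < b) {u : ℝ → ℝ}
    (hu : ContinuousOn u (Set.Icc a b)) :
    ∫ x in a..b, (u x - (∫ y in a..b, u y) / (b - a)) ^ 2
      = (∫ x in a..b, u x ^ 2) - (∫ x in a..b, u x) ^ 2 / (b - a) := by
  rw [integral_sub_const_sq hab.le hu]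
  have : b - a ≠ 0 := by linarith
  field_simp
  ring

/-- The sharp Poincaré–Wirtinger inequality on `[a, b]`, with the variance expanded. -/
lemma poincare_wirtinger {a b : ℝ} (hab : a < b) {u u' : ℝ → ℝ}
    (huc : ContinuousOn u (Set.Icc a b)) (hu : ∀ x ∈ Set.Ioo a b, HasDerivAt u (u' x) x)
    (hu' : ContinuousOn u' (Set.Icc a b)) :
    (∫ x in a..b, u x ^ 2) - (∫ x in a..b, u x) ^ 2 / (b - a)
      ≤ (b - a) ^ 2 / Real.pi ^ 2 * ∫ x in a..b, u' x ^ 2 := by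
  have hL : 0 < b - a := sub_pos.2 hab
  rw [← integral_sub_mean_sq hab huc]
  set m := (∫ y in a..b, u y) / (b - a) with hm
  have hvc : ContinuousOn (fun x => u x - m) (Set.Icc a b) := by fun_prop
  have hvi : IntervalIntegrable (fun x => u x - m) MeasureTheory.volume a b :=
    hvc.intervalIntegrable_of_Icc hab.le
  have hint : ∫ x in a..b, (u x - m) = 0 := by
    rw [intervalIntegral.integral_sub (huc.intervalIntegrable_of_Icc hab.le)
      (by simp), intervalIntegral.integral_const, hm]
    simp only [smul_eq_mul]
    field_simp
    ring
  have hsub : ∀ k : ℝ, 0 ≤ k → k * (b - a) < Real.pi →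
      k ^ 2 * ∫ x in a..b, (u x - m) ^ 2 ≤ ∫ x in a..b, u' x ^ 2 := by
    intro k hk0 hk
    refine wirtinger_aux (F := fun x => ∫ y in a..x, (u y - m)) hab hk0 hk ?_ ?_ (by simp)
      hint hvc (fun x hx => (hu x hx).sub_const m) hu'
    · have := intervalIntegral.continuousOn_primitive_interval (μ := MeasureTheory.volume)
        (f := fun x => u x - m) (a := a) (b := b)
        (by rw [Set.uIcc_of_le hab.le]; exact hvc.integrableOn_Icc)
      rwa [Set.uIcc_of_le hab.le] at this
    · intro x hx
      apply intervalIntegral.integral_hasDerivAt_right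
      · exact (hvc.mono (Set.Icc_subset_Icc_right hx.2.le)).intervalIntegrable_of_Icc hx.1.le
      · exact (hvc.mono Set.Ioo_subset_Icc_self).stronglyMeasurableAtFilter isOpen_Ioo x hx
      · exact hvc.continuousAt (Icc_mem_nhds hx.1 hx.2)
  have hlim : (Real.pi / (b - a)) ^ 2 * ∫ x in a..b, (u x - m) ^ 2
      ≤ ∫ x in a..b, u' x ^ 2 := by
    have hpos : 0 < Real.pi / (b - a) := div_pos Real.pi_pos hL
    have ht : Filter.Tendsto (fun k : ℝ => k ^ 2 * ∫ x in a..b, (u x - m) ^ 2)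
        (nhdsWithin (Real.pi / (b - a)) (Set.Iio (Real.pi / (b - a))))
        (nhds ((Real.pi / (b - a)) ^ 2 * ∫ x in a..b, (u x - m) ^ 2)) := by
      apply Filter.Tendsto.mono_left _ nhdsWithin_le_nhds
      exact Continuous.tendsto (by fun_prop) _
    refine le_of_tendsto ht ?_
    filter_upwards [Ioo_mem_nhdsLT hpos] with k hk
    exact hsub k hk.1.le ((lt_div_iff₀ hL).1 hk.2)
  have hpi := Real.pi_pos
  calc ∫ x in a..b, (u x - m) ^ 2
      = (b - a) ^ 2 / Real.pi ^ 2 *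
          ((Real.pi / (b - a)) ^ 2 * ∫ x in a..b, (u x - m) ^ 2) := by
        field_simp
    _ ≤ _ := by gcongr

/-- Comparison of the discrete seminorm `σ(u)² = |u|_{*,h}²` with
continuous quantities: `‖u - ū‖² - (h²/π²)|u|² ≤ σ(u)² ≤ ‖u‖²` for `u ∈ C¹([0,1])`. -/
theorem stmt7 (n : ℕ) (hn : 1 ≤ n) (u u' : ℝ → ℝ)
    (hu : ∀ x ∈ Set.Icc (0:ℝ) 1, HasDerivWithinAt u (u' x) (Set.Icc 0 1) x)
    (hu' : ContinuousOn u' (Set.Icc 0 1))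
    (ubar : ℝ) (hubar : ubar = ∫ x in (0:ℝ)..1, u x) :
    (∫ x in (0:ℝ)..1, (u x - ubar)^2) -
        ((1 / (n : ℝ))^2 / Real.pi^2) * ∫ x in (0:ℝ)..1, (u' x)^2 ≤ sigmaSq n u ∧
      sigmaSq n u ≤ ∫ x in (0:ℝ)..1, (u x)^2 := by
  have hn0 : (0:ℝ) < n := by exact_mod_cast hn
  have huc : ContinuousOn u (Set.Icc 0 1) := fun x hx => (hu x hx).continuousWithinAt
  have hle : ∀ i : ℕ, (i : ℝ) / n < ((i : ℝ) + 1) / n := fun i => by gcongr; linarith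
  have hcell : ∀ i ∈ Finset.range n,
      Set.Icc ((i : ℝ) / n) (((i : ℝ) + 1) / n) ⊆ Set.Icc 0 1 := by
    intro i hi
    apply Set.Icc_subset_Icc (by positivity)
    rw [div_le_one hn0]
    exact_mod_cast Finset.mem_range.1 hi
  have hlen : ∀ i : ℕ, ((i : ℝ) + 1) / n - (i : ℝ) / n = 1 / n := fun i => by ring
  have hsum : ∀ f : ℝ → ℝ, ContinuousOn f (Set.Icc 0 1) →
      ∑ i ∈ Finset.range n, ∫ x in ((i : ℝ) / n)..(((i : ℝ) + 1) / n), f x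
        = ∫ x in (0:ℝ)..1, f x := by
    intro f hf
    have h := intervalIntegral.sum_integral_adjacent_intervals (μ := MeasureTheory.volume)
      (f := f) (a := fun i : ℕ => (i : ℝ) / n) (n := n) (fun i hi => by
        have h1 := (hf.mono (hcell i (Finset.mem_range.2 hi))).intervalIntegrable_of_Icc
          (μ := MeasureTheory.volume) (hle i).le
        simpa using h1)
    simpa [div_self hn0.ne'] using h
  have hsig : sigmaSq n u = ∑ i ∈ Finset.range n,
      (∫ x in ((i : ℝ) / n)..(((i : ℝ) + 1) / n), u x) ^ 2 / (1 / (n : ℝ))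
        - (∫ x in (0:ℝ)..1, u x) ^ 2 := by
    rw [sigmaSq, Finset.mul_sum]
    congr 1
    refine Finset.sum_congr rfl fun i _ => ?_
    field_simp
  have hsq := hsum (fun x => u x ^ 2) (by fun_prop)
  have hsq' := hsum (fun x => u' x ^ 2) (by fun_prop)
  rw [hsig]
  constructor
  · have hmain : ∑ i ∈ Finset.range n,
        ((∫ x in ((i : ℝ) / n)..(((i : ℝ) + 1) / n), u x ^ 2)
          - (∫ x in ((i : ℝ) / n)..(((i : ℝ) + 1) / n), u x) ^ 2 / (1 / (n : ℝ)))
        ≤ ∑ i ∈ Finset.range n, (1 / (n : ℝ)) ^ 2 / Real.pi ^ 2 *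
          ∫ x in ((i : ℝ) / n)..(((i : ℝ) + 1) / n), u' x ^ 2 := by
      refine Finset.sum_le_sum fun i hi => ?_
      have h := poincare_wirtinger (hle i) (huc.mono (hcell i hi)) (u' := u') ?_
        (hu'.mono (hcell i hi))
      · rwa [hlen] at h
      · intro x hx
        have hs := hcell i hi
        have hx' := hs (Set.Ioo_subset_Icc_self hx)
        exact (hu x hx').hasDerivAt (Filter.mem_of_superset (Icc_mem_nhds hx.1 hx.2) hs)
    rw [Finset.sum_sub_distrib, hsq, ← Finset.mul_sum, hsq'] at hmain
    rw [integral_sub_const_sq zero_le_one huc, ← hubar]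
    linarith
  · have hmain : ∑ i ∈ Finset.range n,
        (∫ x in ((i : ℝ) / n)..(((i : ℝ) + 1) / n), u x) ^ 2 / (1 / (n : ℝ))
        ≤ ∑ i ∈ Finset.range n, ∫ x in ((i : ℝ) / n)..(((i : ℝ) + 1) / n), u x ^ 2 := by
      refine Finset.sum_le_sum fun i hi => ?_
      have h := integral_sub_mean_sq (hle i) (huc.mono (hcell i hi))
      have h0 : 0 ≤ ∫ x in ((i : ℝ) / n)..(((i : ℝ) + 1) / n),
          (u x - (∫ y in ((i : ℝ) / n)..(((i : ℝ) + 1) / n), u y)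
            / (((i : ℝ) + 1) / n - (i : ℝ) / n)) ^ 2 :=
        intervalIntegral.integral_nonneg (hle i).le fun x _ => sq_nonneg _
      rw [h, hlen] at h0
      linarith
    rw [hsq] at hmain
    linarith [sq_nonneg (∫ x in (0:ℝ)..1, u x)]
end

section
/- Fix an integer n ≥ 2 and set h = 1/n and x_i = i·h (i = 0,…,n). Let M_h denote the space of continuous functions v : [0,1] → ℝ with v(0) = v(1) = 0 that are affine on each subinterval [x_{i−1}, x_i]. For an integrable w : [0,1] → ℝ set σ(w)² := (1/n)·Σ_{i=1}^n ( (1/h)·∫_{x_{i−1}}^{x_i} w(x) dx )² − ( ∫_0^1 w(x) dx )². Let ε > 0, let f : [0,1] → ℝ be continuous, and let u ∈ C²([0,1]) satisfy −ε·u″(x) + u′(x) = f(x) for all x ∈ [0,1] with u(0) = u(1) = 0. If u_h ∈ M_h satisfies ε·∫_0^1 u_h′(x)v_h′(x) dx + ∫_0^1 u_h′(x)v_h(x) dx = ∫_0^1 f(x)v_h(x) dx for all v_h ∈ M_h, then for every v_h ∈ M_h: ε²·∫_0^1 ((u−u_h)′(x))² dx + σ(u−u_h)² ≤ (1 + h²/(π²·ε²))·(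 ε²·∫_0^1 ((u−v_h)′(x))² dx + σ(u−v_h)² ). -/
/-! ### Integrals over mesh cells -/

/-- Splits an integral over `[0,1]` along the mesh `i/n`, replacing the integrand on each open cell
by a continuous representative; the values at the nodes are irrelevant. -/
lemma integral_split (n : ℕ) (hn : 0 < n) (F : ℝ → ℝ) (G : ℕ → ℝ → ℝ)
    (hG : ∀ i < n, ContinuousOn (G i) (Set.Icc ((i : ℝ) / n) (((i : ℝ) + 1) / n)))
    (hFG : ∀ i < n, ∀ x ∈ Set.Ioo ((i : ℝ) / n) (((i : ℝ) + 1) / n), F x = G i x) :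
    ∫ x in (0:ℝ)..1, F x =
      ∑ i ∈ Finset.range n, ∫ x in ((i : ℝ) / n)..(((i : ℝ) + 1) / n), G i x := by
  have hn' : (0:ℝ) < n := by exact_mod_cast hn
  have hle : ∀ i : ℕ, (i : ℝ) / n ≤ ((i : ℝ) + 1) / n := fun i => by gcongr; linarith
  have hint : ∀ i < n, IntervalIntegrable (G i) MeasureTheory.volume
      ((i : ℝ) / n) (((i : ℝ) + 1) / n) := fun i hi => by
    apply ContinuousOn.intervalIntegrable
    rw [Set.uIcc_of_le (hle i)]
    exact hG i hi
  have hF : ∀ i < n, IntervalIntegrable F MeasureTheory.volume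
      ((i : ℝ) / n) (((i : ℝ) + 1) / n) := fun i hi => by
    refine (hint i hi).congr_uIoo ?_
    rw [Set.uIoo_of_le (hle i)]
    exact fun x hx => (hFG i hi x hx).symm
  have h := intervalIntegral.sum_integral_adjacent_intervals (f := F)
    (μ := MeasureTheory.volume) (a := fun i : ℕ => (i : ℝ) / n) (n := n)
    (fun i hi => by push_cast; exact hF i hi)
  have e1 : ((n : ℕ) : ℝ) / n = 1 := div_self hn'.ne'
  simp only [Nat.cast_zero, zero_div, e1] at h
  rw [← h]
  refine Finset.sum_congr rfl fun i hi => ?_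
  push_cast
  apply intervalIntegral.integral_congr_uIoo
  rw [Set.uIoo_of_le (hle i)]
  exact hFG i (Finset.mem_range.1 hi)

lemma integral_affine (p q a c : ℝ) :
    ∫ x in p..q, (a * x + c) = (q - p) * ((a * p + c) + (a * q + c)) / 2 := by
  rw [intervalIntegral.integral_add (Continuous.intervalIntegrable (by fun_prop) _ _)
    (Continuous.intervalIntegrable (by fun_prop) _ _), intervalIntegral.integral_const_mul]
  simp
  ring

/-- Trapezoidal rule error. The error is `-∫ (x - (p+q)/2) g`, and `(q-p)³/12` is the squared
`L²` norm of `x - (p+q)/2`, so this is Cauchy–Schwarz. -/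
lemma trapezoid_error (p q : ℝ) (hpq : p < q) (e g : ℝ → ℝ)
    (he : ∀ x ∈ Set.Icc p q, HasDerivWithinAt e (g x) (Set.Icc p q) x)
    (hg : ContinuousOn g (Set.Icc p q)) :
    ((∫ x in p..q, e x) - (q - p) * (e p + e q) / 2) ^ 2 ≤
      (q - p) ^ 3 / 12 * ∫ x in p..q, g x ^ 2 := by
  set I := (q - p) * (e p + e q) / 2 - ∫ x in p..q, e x with hI
  have hu : Set.uIcc p q = Set.Icc p q := Set.uIcc_of_le hpq.le
  have hg' : ContinuousOn g (Set.uIcc p q) := by rwa [hu]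
  have key : ∫ x in p..q, (x - (p + q) / 2) * g x = I := by
    have := intervalIntegral.integral_mul_deriv_eq_deriv_mul_of_hasDerivWithinAt
      (a := p) (b := q) (u := fun x => x - (p + q) / 2) (v := e) (u' := fun _ => 1) (v' := g)
      (fun x _ => ((hasDerivAt_id x).sub_const _).hasDerivWithinAt)
      (fun x hx => by rw [hu] at hx ⊢; exact he x hx)
      (by simp) hg'.intervalIntegrable
    rw [this, hI]
    simp only [one_mul]
    ring
  have hsq : ∫ x in p..q, (x - (p + q) / 2) ^ 2 = (q - p) ^ 3 / 12 := by
    have := intervalIntegral.integral_comp_sub_right (fun x => x ^ 2) ((p + q) / 2)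
      (a := p) (b := q)
    rw [this, integral_pow]
    norm_num
    ring
  have hpos : 0 < (q - p) ^ 3 / 12 := by have := sub_pos.2 hpq; positivity
  -- `t` is the coefficient of the orthogonal projection of `g` onto `x - midpoint`
  set t := I / ((q - p) ^ 3 / 12) with ht
  have h0 : 0 ≤ ∫ x in p..q, (g x - t * (x - (p + q) / 2)) ^ 2 :=
    intervalIntegral.integral_nonneg hpq.le fun x _ => sq_nonneg _
  have hexp : ∫ x in p..q, (g x - t * (x - (p + q) / 2)) ^ 2 =
      (∫ x in p..q, g x ^ 2) - 2 * t * I + t ^ 2 * ((q - p) ^ 3 / 12) := by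
    rw [← key, ← hsq, ← intervalIntegral.integral_const_mul, ← intervalIntegral.integral_const_mul,
      ← intervalIntegral.integral_sub, ← intervalIntegral.integral_add]
    · congr 1; ext x; ring
    all_goals apply ContinuousOn.intervalIntegrable; fun_prop
  rw [hexp] at h0
  have ht' : t * ((q - p) ^ 3 / 12) = I := div_mul_cancel₀ _ hpos.ne'
  have h2 : ((∫ x in p..q, e x) - (q - p) * (e p + e q) / 2) ^ 2 = I ^ 2 := by rw [hI]; ring
  rw [h2]
  have := mul_nonneg hpos.le h0
  calc I ^ 2 = (q - p) ^ 3 / 12 * (∫ x in p..q, g x ^ 2) - (q - p) ^ 3 / 12 *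
        ((∫ x in p..q, g x ^ 2) - 2 * t * I + t ^ 2 * ((q - p) ^ 3 / 12)) := by
        linear_combination (t * ((q - p) ^ 3 / 12) - I) * ht'
    _ ≤ _ := by linarith

/-! ### The estimate for finite sequences -/

/-- The estimate as a statement about finite sequences: `e`, `z` are the nodal values of `u - u_h`
and `u_h - v_h`, `m i` and `B i` the cell mean of `u - u_h` and the cell integral of
`((u - u_h)')²`. The hypothesis `hc` is Galerkin orthogonality. -/
lemma discrete_estimate (n : ℕ) (hn : 0 < n) (ε c : ℝ) (hε : 0 < ε) (e z m B : ℕ → ℝ)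
    (he0 : e 0 = 0) (hen : e n = 0) (hz0 : z 0 = 0) (hzn : z n = 0)
    (hc : ∀ i < n, ε * (n * (e (i + 1) - e i)) - m i = c)
    (hB : ∀ i < n, (m i - (e i + e (i + 1)) / 2) ^ 2 ≤ B i / (12 * n)) :
    ε ^ 2 * (∑ i ∈ Finset.range n, B i) +
        (1 / (n : ℝ) * (∑ i ∈ Finset.range n, m i ^ 2) -
          (1 / (n : ℝ) * ∑ i ∈ Finset.range n, m i) ^ 2) ≤
      (1 + (1 / (n : ℝ)) ^ 2 / (Real.pi ^ 2 * ε ^ 2)) *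
        (ε ^ 2 * (∑ i ∈ Finset.range n, (B i + 2 * n * (e (i + 1) - e i) * (z (i + 1) - z i)
            + n * (z (i + 1) - z i) ^ 2)) +
          (1 / (n : ℝ) * (∑ i ∈ Finset.range n, (m i + (z i + z (i + 1)) / 2) ^ 2) -
            (1 / (n : ℝ) * ∑ i ∈ Finset.range n, (m i + (z i + z (i + 1)) / 2)) ^ 2)) := by
  have hn' : (0:ℝ) < n := by exact_mod_cast hn
  have hn0 : (n:ℝ) ≠ 0 := hn'.ne'
  have hm : ∀ i ∈ Finset.range n, m i = ε * (n * (e (i + 1) - e i)) - c := fun i hi => by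
    linarith [hc i (Finset.mem_range.1 hi)]
  have se : ∑ i ∈ Finset.range n, (e (i + 1) - e i) = 0 := by
    rw [Finset.sum_range_sub, he0, hen, sub_zero]
  have sz : ∑ i ∈ Finset.range n, (z (i + 1) - z i) = 0 := by
    rw [Finset.sum_range_sub, hz0, hzn, sub_zero]
  have sz2 : ∑ i ∈ Finset.range n, (z (i + 1) - z i) * ((z i + z (i + 1)) / 2) = 0 := by
    rw [Finset.sum_congr rfl (g := fun i => z (i + 1) ^ 2 / 2 - z i ^ 2 / 2) fun i _ => by ring,
      Finset.sum_range_sub (fun i => z i ^ 2 / 2), hz0, hzn, sub_self]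
  have se2 : ∑ i ∈ Finset.range n, (e (i + 1) - e i) * ((e i + e (i + 1)) / 2) = 0 := by
    rw [Finset.sum_congr rfl (g := fun i => e (i + 1) ^ 2 / 2 - e i ^ 2 / 2) fun i _ => by ring,
      Finset.sum_range_sub (fun i => e i ^ 2 / 2), he0, hen, sub_self]
  set M := 1 / (n : ℝ) * ∑ i ∈ Finset.range n, (z i + z (i + 1)) / 2 with hM
  have sM : ∑ i ∈ Finset.range n, (z i + z (i + 1)) / 2 = n * M := by rw [hM]; field_simp
  set S := ∑ i ∈ Finset.range n, B i with hS
  set A := ∑ i ∈ Finset.range n, n * (e (i + 1) - e i) ^ 2 with hA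
  have sm : ∑ i ∈ Finset.range n, m i = - n * c := by
    rw [Finset.sum_congr rfl hm, Finset.sum_sub_distrib, ← Finset.mul_sum, ← Finset.mul_sum, se]
    simp
  have hlhs : 1 / (n : ℝ) * (∑ i ∈ Finset.range n, m i ^ 2) -
      (1 / (n : ℝ) * ∑ i ∈ Finset.range n, m i) ^ 2 = ε ^ 2 * A := by
    have h1 : ∑ i ∈ Finset.range n, m i ^ 2 = n * ε ^ 2 * A + n * c ^ 2 := by
      have : ∀ i ∈ Finset.range n, m i ^ 2 = n * ε ^ 2 * (n * (e (i + 1) - e i) ^ 2)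
          - 2 * ε * n * c * (e (i + 1) - e i) + c ^ 2 := fun i hi => by rw [hm i hi]; ring
      rw [Finset.sum_congr rfl this, Finset.sum_add_distrib, Finset.sum_sub_distrib]
      simp [hA, ← Finset.mul_sum, se]
    rw [h1, sm]
    field_simp
    ring
  -- `‖u - v_h‖²` equals `ε² |u - u_h|₁²` plus a sum of squares
  have hrhs : ε ^ 2 * S ≤
      ε ^ 2 * (∑ i ∈ Finset.range n, (B i + 2 * n * (e (i + 1) - e i) * (z (i + 1) - z i)
            + n * (z (i + 1) - z i) ^ 2)) +
          (1 / (n : ℝ) * (∑ i ∈ Finset.range n, (m i + (z i + z (i + 1)) / 2) ^ 2) -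
            (1 / (n : ℝ) * ∑ i ∈ Finset.range n, (m i + (z i + z (i + 1)) / 2)) ^ 2) := by
    have h2 : 1 / (n : ℝ) * ∑ i ∈ Finset.range n, (m i + (z i + z (i + 1)) / 2) = M - c := by
      rw [Finset.sum_add_distrib, sm, sM]
      field_simp
      ring
    have h3 : ε ^ 2 * (∑ i ∈ Finset.range n, (B i + 2 * n * (e (i + 1) - e i) * (z (i + 1) - z i)
            + n * (z (i + 1) - z i) ^ 2)) +
          1 / (n : ℝ) * (∑ i ∈ Finset.range n, (m i + (z i + z (i + 1)) / 2) ^ 2) =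
        ∑ i ∈ Finset.range n, (ε ^ 2 * B i + 1 / n * (ε * n * (e (i + 1) - e i)
            + ε * n * (z (i + 1) - z i) + (z i + z (i + 1)) / 2 - M) ^ 2
          + 2 * ε * (M - c) * (e (i + 1) - e i) + 2 * ε * M * (z (i + 1) - z i)
          - 2 * ε * ((z (i + 1) - z i) * ((z i + z (i + 1)) / 2))
          + 2 / n * (M - c) * ((z i + z (i + 1)) / 2) + (c ^ 2 - M ^ 2) / n) := by
      rw [Finset.mul_sum, Finset.mul_sum, ← Finset.sum_add_distrib]
      refine Finset.sum_congr rfl fun i hi => ?_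
      rw [hm i hi]
      field_simp
      ring
    have h4 : ∑ i ∈ Finset.range n, (ε ^ 2 * B i + 1 / n * (ε * n * (e (i + 1) - e i)
            + ε * n * (z (i + 1) - z i) + (z i + z (i + 1)) / 2 - M) ^ 2
          + 2 * ε * (M - c) * (e (i + 1) - e i) + 2 * ε * M * (z (i + 1) - z i)
          - 2 * ε * ((z (i + 1) - z i) * ((z i + z (i + 1)) / 2))
          + 2 / n * (M - c) * ((z i + z (i + 1)) / 2) + (c ^ 2 - M ^ 2) / n) =
        ε ^ 2 * S + 1 / n * (∑ i ∈ Finset.range n, (ε * n * (e (i + 1) - e i)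
            + ε * n * (z (i + 1) - z i) + (z i + z (i + 1)) / 2 - M) ^ 2) + (M - c) ^ 2 := by
      simp only [Finset.sum_add_distrib, Finset.sum_sub_distrib, ← Finset.mul_sum, se, sz, sz2, sM,
        Finset.sum_const, Finset.card_range, nsmul_eq_mul, ← hS]
      generalize ∑ i ∈ Finset.range n, (ε * n * (e (i + 1) - e i)
            + ε * n * (z (i + 1) - z i) + (z i + z (i + 1)) / 2 - M) ^ 2 = Q
      field_simp
      ring
    have h5 : 0 ≤ 1 / (n:ℝ) * (∑ i ∈ Finset.range n, (ε * n * (e (i + 1) - e i)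
            + ε * n * (z (i + 1) - z i) + (z i + z (i + 1)) / 2 - M) ^ 2) :=
      mul_nonneg (by positivity) (Finset.sum_nonneg fun i _ => sq_nonneg _)
    rw [h2, ← add_sub_assoc, h3, h4]
    linarith
  have hS0 : 0 ≤ S := Finset.sum_nonneg fun i hi => by
    have := (sq_nonneg _).trans (hB i (Finset.mem_range.1 hi))
    by_contra hcon
    exact absurd (div_neg_of_neg_of_pos (not_le.1 hcon) (by positivity : (0:ℝ) < 12 * n)) this.not_gt
  have hA0 : 0 ≤ A := Finset.sum_nonneg fun i _ => by positivity
  have hAS : ε ^ 2 * A ≤ S / (12 * n ^ 2) := by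
    have h1 : ε * A = ∑ i ∈ Finset.range n, (e (i + 1) - e i) * (m i - (e i + e (i + 1)) / 2) := by
      have : ∀ i ∈ Finset.range n, (e (i + 1) - e i) * (m i - (e i + e (i + 1)) / 2) =
        ε * (n * (e (i + 1) - e i) ^ 2) - c * (e (i + 1) - e i)
          - (e (i + 1) - e i) * ((e i + e (i + 1)) / 2) := fun i hi => by rw [hm i hi]; ring
      rw [Finset.sum_congr rfl this, Finset.sum_sub_distrib, Finset.sum_sub_distrib, se2]
      simp [hA, ← Finset.mul_sum, se]
    have h2 := Finset.sum_mul_sq_le_sq_mul_sq (Finset.range n) (fun i => e (i + 1) - e i)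
      (fun i => m i - (e i + e (i + 1)) / 2)
    rw [← h1] at h2
    have h3 : ∑ i ∈ Finset.range n, (m i - (e i + e (i + 1)) / 2) ^ 2 ≤ S / (12 * n) := by
      rw [hS, Finset.sum_div]
      exact Finset.sum_le_sum fun i hi => hB i (Finset.mem_range.1 hi)
    have h4 : ∑ i ∈ Finset.range n, (e (i + 1) - e i) ^ 2 = A / n := by
      rw [hA, ← Finset.mul_sum]; field_simp
    rw [h4] at h2
    have h5 : (ε * A) ^ 2 ≤ A * (S / (12 * n ^ 2)) :=
      h2.trans ((mul_le_mul_of_nonneg_left h3 (by positivity)).trans_eq (by field_simp))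
    rcases hA0.eq_or_lt with h | h
    · rw [← h, mul_zero]; positivity
    · refine le_of_mul_le_mul_left ?_ h
      linarith [h5, mul_pow ε A 2, (by ring : A * (ε ^ 2 * A) = (ε * A) ^ 2)]
  have hpi : Real.pi ^ 2 ≤ 12 := by nlinarith [Real.pi_lt_d2, Real.pi_pos]
  have hκ : ε ^ 2 * A ≤ (1 / (n : ℝ)) ^ 2 / (Real.pi ^ 2 * ε ^ 2) * (ε ^ 2 * S) := by
    refine hAS.trans ?_
    have : (1 / (n : ℝ)) ^ 2 / (Real.pi ^ 2 * ε ^ 2) * (ε ^ 2 * S) = S / (Real.pi ^ 2 * n ^ 2) := by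
      have := Real.pi_pos.ne'
      field_simp
    rw [this]
    have := Real.pi_pos
    gcongr
  rw [hlhs]
  refine le_trans ?_ (mul_le_mul_of_nonneg_left hrhs (by positivity))
  linarith

/-! ### Piecewise linear functions and integration by parts on a cell -/

lemma InMh.exists_affine {n : ℕ} {v : ℝ → ℝ} (hv : InMh n v) :
    ∃ a c : ℕ → ℝ, ∀ i < n, ∀ x ∈ Set.Icc ((i : ℝ) / n) (((i : ℝ) + 1) / n),
      v x = a i * x + c i := by
  have h : ∀ i : ℕ, ∃ a c : ℝ, i < n → ∀ x ∈ Set.Icc ((i : ℝ) / n) (((i : ℝ) + 1) / n),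
      v x = a * x + c := fun i => by
    by_cases hi : i < n
    · obtain ⟨a, c, h⟩ := hv.2.2.2 (i + 1) (by omega) hi
      push_cast at h
      rw [add_sub_cancel_right] at h
      exact ⟨a, c, fun _ => h⟩
    · exact ⟨0, 0, fun h => absurd h hi⟩
  choose a c h using h
  exact ⟨a, c, h⟩

lemma deriv_of_affine {p q a c : ℝ} {v : ℝ → ℝ} (h : ∀ x ∈ Set.Icc p q, v x = a * x + c)
    {x : ℝ} (hx : x ∈ Set.Ioo p q) : deriv v x = a := by
  have : v =ᶠ[nhds x] fun x => a * x + c :=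
    Filter.eventually_of_mem (Ioo_mem_nhds hx.1 hx.2) fun y hy => h y (Set.Ioo_subset_Icc_self hy)
  rw [this.deriv_eq]
  simp

/-- Integration by parts on one cell, with `a x + c` the trial function and `s x + t` the test
function there. -/
lemma cell_identity (p q ε a c s t : ℝ) (hpq : p ≤ q) (f u u' u'' : ℝ → ℝ)
    (hf : ContinuousOn f (Set.Icc p q))
    (hu : ∀ x ∈ Set.Icc p q, HasDerivWithinAt u (u' x) (Set.Icc p q) x)
    (hu' : ∀ x ∈ Set.Icc p q, HasDerivWithinAt u' (u'' x) (Set.Icc p q) x)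
    (hode : ∀ x ∈ Set.Icc p q, -ε * u'' x + u' x = f x) :
    (∫ x in p..q, f x * (s * x + t)) - ε * (∫ _ in p..q, a * s) - (∫ x in p..q, a * (s * x + t)) =
      (-ε * u' q + (u q - (a * q + c))) * (s * q + t) -
        (-ε * u' p + (u p - (a * p + c))) * (s * p + t) +
      s * (ε * ((u q - (a * q + c)) - (u p - (a * p + c))) - ∫ x in p..q, (u x - (a * x + c))) := by
  have hI : Set.uIcc p q = Set.Icc p q := Set.uIcc_of_le hpq
  have cu : ContinuousOn u (Set.uIcc p q) := by
    rw [hI]; exact fun x hx => (hu x hx).continuousWithinAt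
  have cu' : ContinuousOn u' (Set.uIcc p q) := by
    rw [hI]; exact fun x hx => (hu' x hx).continuousWithinAt
  have cf : ContinuousOn f (Set.uIcc p q) := by rwa [hI]
  have ftc : ∫ x in p..q, u' x = u q - u p := by
    refine intervalIntegral.integral_eq_sub_of_hasDeriv_right_of_le hpq (hI ▸ cu) (fun x hx => ?_)
      cu'.intervalIntegrable
    exact ((hu x (Set.Ioo_subset_Icc_self hx)).hasDerivAt (Icc_mem_nhds hx.1 hx.2)).hasDerivWithinAt
  have cg : ContinuousOn (fun x => (f x - a) * (s * x + t) +
      s * (-ε * u' x + (u x - (a * x + c)))) (Set.uIcc p q) := by fun_prop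
  have parts := intervalIntegral.integral_eq_sub_of_hasDeriv_right_of_le hpq
    (f := fun x => (-ε * u' x + (u x - (a * x + c))) * (s * x + t))
    (f' := fun x => (f x - a) * (s * x + t) + s * (-ε * u' x + (u x - (a * x + c))))
    (by rw [← hI]; fun_prop) (fun x hx => by
      have hx' := Set.Ioo_subset_Icc_self hx
      have h1 := (hu x hx').hasDerivAt (Icc_mem_nhds hx.1 hx.2)
      have h2 := (hu' x hx').hasDerivAt (Icc_mem_nhds hx.1 hx.2)
      have h3 := ((h2.const_mul (-ε)).add
        (h1.sub (((hasDerivAt_id x).const_mul a).add_const c))).mul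
        (((hasDerivAt_id x).const_mul s).add_const t)
      refine (h3.congr_deriv ?_).hasDerivWithinAt
      simp only [← hode x hx', id, Pi.add_apply, Pi.sub_apply]
      ring)
    cg.intervalIntegrable
  have split : ∫ x in p..q, ((f x - a) * (s * x + t) + s * (-ε * u' x + (u x - (a * x + c)))) =
      (∫ x in p..q, f x * (s * x + t)) - (∫ x in p..q, a * (s * x + t)) -
        s * ε * (∫ x in p..q, u' x) + s * ∫ x in p..q, (u x - (a * x + c)) := by
    rw [← intervalIntegral.integral_const_mul, ← intervalIntegral.integral_const_mul,
      ← intervalIntegral.integral_sub, ← intervalIntegral.integral_sub,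
      ← intervalIntegral.integral_add]
    · congr 1; ext x; ring
    all_goals apply ContinuousOn.intervalIntegrable; fun_prop
  rw [split, ftc] at parts
  rw [intervalIntegral.integral_const, smul_eq_mul]
  linear_combination parts

/-! ### Tent functions -/

/-- Tent function with peak at the node `(k+1)/n`. -/
noncomputable def tent (n k : ℕ) (x : ℝ) : ℝ := max 0 (1 - |n * x - (k + 1)|)

lemma tent_affine (n k : ℕ) (hn : 0 < n) (i : ℕ) (x : ℝ)
    (hx : x ∈ Set.Icc ((i : ℝ) / n) (((i : ℝ) + 1) / n)) :
    tent n k x = ((if i = k then (n : ℝ) else 0) - (if i = k + 1 then (n : ℝ) else 0)) * x +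
      ((if i = k then -(k : ℝ) else 0) + (if i = k + 1 then (k : ℝ) + 2 else 0)) := by
  have hn' : (0:ℝ) < n := by exact_mod_cast hn
  obtain ⟨h1, h2⟩ := hx
  rw [div_le_iff₀ hn'] at h1
  rw [le_div_iff₀ hn'] at h2
  unfold tent
  rcases lt_trichotomy i k with h | h | h
  · rw [if_neg (by omega), if_neg (by omega), if_neg (by omega), if_neg (by omega)]
    have : (i : ℝ) + 1 ≤ k := by exact_mod_cast h
    rw [abs_of_nonpos (by linarith), max_eq_left (by linarith)]
    ring
  · subst h
    rw [if_pos rfl, if_neg (by omega), if_pos rfl, if_neg (by omega)]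
    rw [abs_of_nonpos (by linarith), max_eq_right (by linarith)]
    ring
  · rcases Nat.eq_or_lt_of_le (Nat.succ_le_of_lt h) with h | h
    · have h' : i = k + 1 := h.symm
      subst h'
      push_cast at h1 h2
      rw [if_neg (by omega), if_pos rfl, if_neg (by omega), if_pos rfl]
      rw [abs_of_nonneg (by linarith), max_eq_right (by linarith)]
      ring
    · rw [if_neg (by omega), if_neg (by omega), if_neg (by omega), if_neg (by omega)]
      have : (k : ℝ) + 2 ≤ i := by exact_mod_cast h
      rw [abs_of_nonneg (by linarith), max_eq_left (by linarith)]
      ring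

lemma tent_mem (n k : ℕ) (hk : k + 1 < n) : InMh n (tent n k) := by
  have hk' : (k : ℝ) + 2 ≤ n := by exact_mod_cast hk
  have hk0 : (0 : ℝ) ≤ k := by positivity
  refine ⟨?_, ?_, ?_, fun i h1 h2 => ?_⟩
  · unfold tent; fun_prop
  · unfold tent
    rw [abs_of_nonpos (by linarith), max_eq_left (by linarith)]
  · unfold tent
    rw [abs_of_nonneg (by linarith), max_eq_left (by linarith)]
  · obtain ⟨j, rfl⟩ : ∃ j, i = j + 1 := ⟨i - 1, by omega⟩
    refine ⟨_, _, fun x hx => tent_affine n k (by omega) j x ?_⟩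
    push_cast at hx
    rwa [add_sub_cancel_right] at hx

/-! ### The error estimate -/

/-- Quasi-optimal error estimate in the discrete optimal trial
norm for the standard `C⁰-P¹` Galerkin discretization of the convection-diffusion
problem `-εu'' + u' = f`, `u(0)=u(1)=0`:
`‖u-u_h‖_{*,h}² ≤ (1 + h²/(π²ε²)) ‖u-v_h‖_{*,h}²` for all `v_h ∈ M_h`. -/
theorem stmt8 (n : ℕ) (hn : 2 ≤ n) (ε : ℝ) (hε : 0 < ε)
    (f : ℝ → ℝ) (hf : ContinuousOn f (Set.Icc 0 1))
    (u u' u'' : ℝ → ℝ)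
    (hu : ∀ x ∈ Set.Icc (0:ℝ) 1, HasDerivWithinAt u (u' x) (Set.Icc 0 1) x)
    (hu' : ∀ x ∈ Set.Icc (0:ℝ) 1, HasDerivWithinAt u' (u'' x) (Set.Icc 0 1) x)
    (hu'' : ContinuousOn u'' (Set.Icc 0 1))
    (hode : ∀ x ∈ Set.Icc (0:ℝ) 1, -ε * u'' x + u' x = f x)
    (hu0 : u 0 = 0) (hu1 : u 1 = 0)
    (uh : ℝ → ℝ) (huh : InMh n uh)
    (hgal : ∀ vh : ℝ → ℝ, InMh n vh →
      ε * (∫ x in (0:ℝ)..1, deriv uh x * deriv vh x) +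
        (∫ x in (0:ℝ)..1, deriv uh x * vh x) = ∫ x in (0:ℝ)..1, f x * vh x) :
    ∀ vh : ℝ → ℝ, InMh n vh →
      ε^2 * (∫ x in (0:ℝ)..1, (u' x - deriv uh x)^2) +
          sigmaSq n (fun x => u x - uh x) ≤
        (1 + (1 / (n : ℝ))^2 / (Real.pi^2 * ε^2)) *
          (ε^2 * (∫ x in (0:ℝ)..1, (u' x - deriv vh x)^2) +
            sigmaSq n (fun x => u x - vh x)) := by
  intro vh hvh
  have hn1 : 0 < n := by omega
  have hn' : (0:ℝ) < n := by exact_mod_cast hn1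
  have hn0 : (n:ℝ) ≠ 0 := hn'.ne'
  have hlt : ∀ i : ℕ, (i : ℝ) / n < ((i : ℝ) + 1) / n := fun i => by gcongr; linarith
  have hlen : ∀ i : ℕ, ((i : ℝ) + 1) / n - (i : ℝ) / n = 1 / n := fun i => by ring
  have hL : ∀ i : ℕ, (i : ℝ) / n ∈ Set.Icc ((i : ℝ) / n) (((i : ℝ) + 1) / n) :=
    fun i => Set.left_mem_Icc.2 (hlt i).le
  have hR : ∀ i : ℕ, ((i : ℝ) + 1) / n ∈ Set.Icc ((i : ℝ) / n) (((i : ℝ) + 1) / n) :=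
    fun i => Set.right_mem_Icc.2 (hlt i).le
  have cu : ContinuousOn u (Set.Icc 0 1) := fun x hx => (hu x hx).continuousWithinAt
  have cu' : ContinuousOn u' (Set.Icc 0 1) := fun x hx => (hu' x hx).continuousWithinAt
  obtain ⟨a, c, hac⟩ := huh.exists_affine
  obtain ⟨b, d, hbd⟩ := hvh.exists_affine
  -- nodal values of `u - u_h` and `u_h - v_h`
  set e : ℕ → ℝ := fun i => u ((i : ℝ) / n) - uh ((i : ℝ) / n) with he
  set z : ℕ → ℝ := fun i => uh ((i : ℝ) / n) - vh ((i : ℝ) / n) with hz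
  set I : ℕ → ℝ := fun i => ∫ x in ((i : ℝ) / n)..(((i : ℝ) + 1) / n), (u x - (a i * x + c i))
    with hI
  set B : ℕ → ℝ := fun i => ∫ x in ((i : ℝ) / n)..(((i : ℝ) + 1) / n), (u' x - a i) ^ 2 with hB
  have eL : ∀ i < n, e i = u ((i : ℝ) / n) - (a i * ((i : ℝ) / n) + c i) := fun i hi => by
    rw [he, ← hac i hi _ (hL i)]
  have eR : ∀ i < n, e (i + 1) = u (((i : ℝ) + 1) / n) - (a i * (((i : ℝ) + 1) / n) + c i) :=
    fun i hi => by
      simp only [he]; push_cast; rw [← hac i hi _ (hR i)]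
  have zL : ∀ i < n, z i = (a i * ((i : ℝ) / n) + c i) - (b i * ((i : ℝ) / n) + d i) :=
    fun i hi => by
      rw [hz, ← hac i hi _ (hL i), ← hbd i hi _ (hL i)]
  have zR : ∀ i < n, z (i + 1) =
      (a i * (((i : ℝ) + 1) / n) + c i) - (b i * (((i : ℝ) + 1) / n) + d i) := fun i hi => by
    simp only [hz]; push_cast; rw [← hac i hi _ (hR i), ← hbd i hi _ (hR i)]
  -- Galerkin orthogonality, tested with a piecewise affine `v`
  have orth : ∀ (v : ℝ → ℝ) (s t : ℕ → ℝ), InMh n v →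
      (∀ i < n, ∀ x ∈ Set.Icc ((i : ℝ) / n) (((i : ℝ) + 1) / n), v x = s i * x + t i) →
      ∑ i ∈ Finset.range n, s i * (ε * (e (i + 1) - e i) - I i) = 0 := by
    intro v s t hv hst
    have h := hgal v hv
    rw [integral_split n hn1 (fun x => deriv uh x * deriv v x) (fun i _ => a i * s i)
        (fun i hi => by fun_prop) (fun i hi x hx => by
          simp only [deriv_of_affine (hac i hi) hx, deriv_of_affine (hst i hi) hx]),
      integral_split n hn1 (fun x => deriv uh x * v x) (fun i x => a i * (s i * x + t i))
        (fun i hi => by fun_prop) (fun i hi x hx => by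
          simp only [deriv_of_affine (hac i hi) hx, hst i hi x (Set.Ioo_subset_Icc_self hx)]),
      integral_split n hn1 (fun x => f x * v x) (fun i x => f x * (s i * x + t i))
        (fun i hi => by have := hf.mono (cell_subset hi); fun_prop) (fun i hi x hx => by
          simp only [hst i hi x (Set.Ioo_subset_Icc_self hx)])] at h
    have tel : ∑ i ∈ Finset.range n,
        ((-ε * u' (((i + 1 : ℕ) : ℝ) / n) + e (i + 1)) * v (((i + 1 : ℕ) : ℝ) / n) -
          (-ε * u' ((i : ℝ) / n) + e i) * v ((i : ℝ) / n)) = 0 := by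
      rw [Finset.sum_range_sub (fun i : ℕ => (-ε * u' ((i : ℝ) / n) + e i) * v ((i : ℝ) / n))]
      simp [div_self hn0, hv.2.1, hv.2.2.1]
    have cell : ∀ i ∈ Finset.range n, s i * (ε * (e (i + 1) - e i) - I i) =
        (∫ x in ((i : ℝ) / n)..(((i : ℝ) + 1) / n), f x * (s i * x + t i)) -
          ε * (∫ _ in ((i : ℝ) / n)..(((i : ℝ) + 1) / n), a i * s i) -
          (∫ x in ((i : ℝ) / n)..(((i : ℝ) + 1) / n), a i * (s i * x + t i)) -
        ((-ε * u' (((i + 1 : ℕ) : ℝ) / n) + e (i + 1)) * v (((i + 1 : ℕ) : ℝ) / n) -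
          (-ε * u' ((i : ℝ) / n) + e i) * v ((i : ℝ) / n)) := by
      intro i hi
      have hi := Finset.mem_range.1 hi
      have hsub := cell_subset hi
      rw [cell_identity _ _ ε (a i) (c i) (s i) (t i) (hlt i).le f u u' u'' (hf.mono hsub)
        (fun x hx => (hu x (hsub hx)).mono hsub) (fun x hx => (hu' x (hsub hx)).mono hsub)
        (fun x hx => hode x (hsub hx)), eL i hi, eR i hi]
      push_cast
      rw [hst i hi _ (hL i), hst i hi _ (hR i)]
      ring
    rw [Finset.sum_congr rfl cell, Finset.sum_sub_distrib, tel, Finset.sum_sub_distrib,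
      Finset.sum_sub_distrib, ← Finset.mul_sum, ← h]
    ring
  -- testing with tents shows that `ε (u - u_h)' - (u - u_h)` has the same mean on all cells
  have step : ∀ k, k + 1 < n → ε * (e (k + 1) - e k) - I k =
      ε * (e (k + 1 + 1) - e (k + 1)) - I (k + 1) := by
    intro k hk
    have h := orth (tent n k) _ _ (tent_mem n k hk) (fun i _ x hx => tent_affine n k hn1 i x hx)
    simp only [sub_mul, ite_mul, zero_mul, Finset.sum_sub_distrib, Finset.sum_ite_eq',
      Finset.mem_range, hk, (Nat.lt_succ_self k).trans hk, if_true] at h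
    have := mul_left_cancel₀ hn0 (sub_eq_zero.1 h)
    exact this
  have const : ∀ i < n, ε * (e (i + 1) - e i) - I i = ε * (e (0 + 1) - e 0) - I 0 := by
    intro i
    induction i with
    | zero => intro _; rfl
    | succ k ih => intro hk; rw [← step k hk, ih (by omega)]
  have e0 : e 0 = 0 := by simp [he, hu0, huh.2.1]
  have en : e n = 0 := by simp [he, div_self hn0, hu1, huh.2.2.1]
  have z0 : z 0 = 0 := by simp [hz, hvh.2.1, huh.2.1]
  have zn : z n = 0 := by simp [hz, div_self hn0, hvh.2.2.1, huh.2.2.1]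
  have main := discrete_estimate n hn1 ε (n * (ε * (e (0 + 1) - e 0) - I 0)) hε e z
    (fun i => n * I i) B e0 en z0 zn
    (fun i hi => by rw [← const i hi]; ring)
    (fun i hi => by
      have hsub := cell_subset hi
      have h := trapezoid_error _ _ (hlt i) (fun x => u x - (a i * x + c i)) (fun x => u' x - a i)
        (fun x hx => by
          have := ((hu x (hsub hx)).mono hsub).sub
            ((((hasDerivAt_id x).const_mul (a i)).add_const (c i)).hasDerivWithinAt)
          rw [mul_one] at this
          exact this)
        (by have := cu'.mono hsub; fun_prop)
      simp only [← eL i hi, ← eR i hi, hlen] at h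
      have h2 := mul_le_mul_of_nonneg_left h (by positivity : (0:ℝ) ≤ (n:ℝ) ^ 2)
      calc (n * I i - (e i + e (i + 1)) / 2) ^ 2
          = (n:ℝ) ^ 2 * (I i - 1 / n * (e i + e (i + 1)) / 2) ^ 2 := by field_simp
        _ ≤ _ := h2
        _ = B i / (12 * n) := by simp only [hB]; field_simp)
  have B1 : ∫ x in (0:ℝ)..1, (u' x - deriv uh x) ^ 2 = ∑ i ∈ Finset.range n, B i :=
    integral_split n hn1 _ (fun i x => (u' x - a i) ^ 2)
      (fun i hi => by have := cu'.mono (cell_subset hi); fun_prop)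
      (fun i hi x hx => by simp only [deriv_of_affine (hac i hi) hx])
  have B2 : ∫ x in (0:ℝ)..1, (u' x - deriv vh x) ^ 2 = ∑ i ∈ Finset.range n,
      (B i + 2 * n * (e (i + 1) - e i) * (z (i + 1) - z i) + n * (z (i + 1) - z i) ^ 2) := by
    rw [integral_split n hn1 _ (fun i x => (u' x - b i) ^ 2)
      (fun i hi => by have := cu'.mono (cell_subset hi); fun_prop)
      (fun i hi x hx => by simp only [deriv_of_affine (hbd i hi) hx])]
    refine Finset.sum_congr rfl fun i hi => ?_
    have hi := Finset.mem_range.1 hi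
    have hsub := cell_subset hi
    have cI : ContinuousOn u' (Set.uIcc ((i : ℝ) / n) (((i : ℝ) + 1) / n)) := by
      rw [Set.uIcc_of_le (hlt i).le]; exact cu'.mono hsub
    have ftc : ∫ x in ((i : ℝ) / n)..(((i : ℝ) + 1) / n), u' x =
        u (((i : ℝ) + 1) / n) - u ((i : ℝ) / n) := by
      refine intervalIntegral.integral_eq_sub_of_hasDeriv_right_of_le (hlt i).le (cu.mono hsub)
        (fun x hx => ?_) cI.intervalIntegrable
      exact (((hu x (hsub (Set.Ioo_subset_Icc_self hx))).mono hsub).hasDerivAt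
        (Icc_mem_nhds hx.1 hx.2)).hasDerivWithinAt
    have hexp : ∫ x in ((i : ℝ) / n)..(((i : ℝ) + 1) / n), (u' x - b i) ^ 2 =
        B i + 2 * (a i - b i) * (∫ x in ((i : ℝ) / n)..(((i : ℝ) + 1) / n), u' x) +
          ∫ x in ((i : ℝ) / n)..(((i : ℝ) + 1) / n), (b i ^ 2 - a i ^ 2) := by
      simp only [hB]
      rw [← intervalIntegral.integral_const_mul, ← intervalIntegral.integral_add,
        ← intervalIntegral.integral_add]
      · congr 1; ext x; ring
      all_goals apply ContinuousOn.intervalIntegrable; fun_prop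
    rw [hexp, ftc, intervalIntegral.integral_const, hlen, eL i hi, eR i hi, zL i hi, zR i hi,
      smul_eq_mul]
    field_simp
    ring
  have m1 : ∀ i < n, ∫ x in ((i : ℝ) / n)..(((i : ℝ) + 1) / n), (u x - uh x) = I i := by
    intro i hi
    refine intervalIntegral.integral_congr_uIoo fun x hx => ?_
    rw [Set.uIoo_of_le (hlt i).le] at hx
    simp only [hac i hi x (Set.Ioo_subset_Icc_self hx)]
  have m2 : ∀ i < n, n * ∫ x in ((i : ℝ) / n)..(((i : ℝ) + 1) / n), (u x - vh x) =
      n * I i + (z i + z (i + 1)) / 2 := by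
    intro i hi
    have cI : ContinuousOn u (Set.uIcc ((i : ℝ) / n) (((i : ℝ) + 1) / n)) := by
      rw [Set.uIcc_of_le (hlt i).le]; exact cu.mono (cell_subset hi)
    have h : ∫ x in ((i : ℝ) / n)..(((i : ℝ) + 1) / n), (u x - vh x) =
        I i + ∫ x in ((i : ℝ) / n)..(((i : ℝ) + 1) / n), ((a i - b i) * x + (c i - d i)) := by
      simp only [hI]
      rw [← intervalIntegral.integral_add]
      · refine intervalIntegral.integral_congr_uIoo fun x hx => ?_
        rw [Set.uIoo_of_le (hlt i).le] at hx
        simp only [hbd i hi x (Set.Ioo_subset_Icc_self hx)]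
        ring
      all_goals apply ContinuousOn.intervalIntegrable; fun_prop
    rw [h, integral_affine, hlen, zL i hi, zR i hi]
    field_simp
    ring
  have total : ∀ v : ℝ → ℝ, InMh n v → ∫ x in (0:ℝ)..1, (u x - v x) = 1 / (n : ℝ) *
      ∑ i ∈ Finset.range n, n * ∫ x in ((i : ℝ) / n)..(((i : ℝ) + 1) / n), (u x - v x) := by
    intro v hv
    rw [integral_split n hn1 _ (fun _ x => u x - v x)
      (fun i hi => (cu.sub hv.1).mono (cell_subset hi)) (fun i hi x hx => rfl), ← Finset.mul_sum]
    field_simp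
  have s1 : sigmaSq n (fun x => u x - uh x) = 1 / (n : ℝ) * (∑ i ∈ Finset.range n, (n * I i) ^ 2) -
      (1 / (n : ℝ) * ∑ i ∈ Finset.range n, n * I i) ^ 2 := by
    unfold sigmaSq
    rw [total uh huh]
    congr 2
    · exact Finset.sum_congr rfl fun i hi => by rw [m1 i (Finset.mem_range.1 hi)]
    · congr 1
      exact Finset.sum_congr rfl fun i hi => by rw [m1 i (Finset.mem_range.1 hi)]
  have s2 : sigmaSq n (fun x => u x - vh x) =
      1 / (n : ℝ) * (∑ i ∈ Finset.range n, (n * I i + (z i + z (i + 1)) / 2) ^ 2) -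
      (1 / (n : ℝ) * ∑ i ∈ Finset.range n, (n * I i + (z i + z (i + 1)) / 2)) ^ 2 := by
    unfold sigmaSq
    rw [total vh hvh]
    congr 2
    · exact Finset.sum_congr rfl fun i hi => by rw [m2 i (Finset.mem_range.1 hi)]
    · congr 1
      exact Finset.sum_congr rfl fun i hi => by rw [m2 i (Finset.mem_range.1 hi)]
  rw [B1, B2, s1, s2]
  exact main
end

section
/- Fix an integer n ≥ 2 and set h = 1/n and x_i = i·h (i = 0,…,n). Let M_h denote the space of continuous functions v : [0,1] → ℝ with v(0) = v(1) = 0 that are affine on each subinterval [x_{i−1}, x_i], and let Q_h denote the space of continuous functions v : [0,1] → ℝ with v(0) = v(1) = 0 that are polynomial of degree at most 2 on each subinterval [x_{i−1}, x_i]. Let ε > 0, let f : [0,1] → ℝ be continuous, and let u ∈ C²([0,1]) satisfy −ε·u″(x) + u′(x) = f(x) for all x ∈ [0,1] with u(0) = u(1) = 0. Suppose (w_h, u_h) ∈ Q_h × M_h satisfies ∫_0^1 w_h′ v_h′ dx + ε·∫_0^1 u_h′ v_h′ dx + ∫_0^1 u_h′ v_h dx = ∫_0^1 f v_h dx for all v_h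 ∈ Q_h, and ε·∫_0^1 q_h′ w_h′ dx + ∫_0^1 q_h′ w_h dx = 0 for all q_h ∈ M_h. Then for every p_h ∈ M_h: ε²·∫_0^1 ((u−u_h)′)² dx + ∫_0^1 (u−u_h)² dx − (∫_0^1 (u−u_h) dx)² ≤ ε²·∫_0^1 ((u−p_h)′)² dx + ∫_0^1 (u−p_h)² dx − (∫_0^1 (u−p_h) dx)². -/
/-- The space `Q_h` of continuous piecewise quadratic functions on the uniform
mesh `x_i = i/n` of `[0,1]` vanishing at both endpoints. -/
def InQh (n : ℕ) (v : ℝ → ℝ) : Prop :=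
  ContinuousOn v (Set.Icc 0 1) ∧ v 0 = 0 ∧ v 1 = 0 ∧
    ∀ i : ℕ, 1 ≤ i → i ≤ n →
      ∃ a b c : ℝ, ∀ x ∈ Set.Icc (((i : ℝ) - 1) / n) ((i : ℝ) / n),
        v x = a * x ^ 2 + b * x + c

open MeasureTheory Set

/-! ### Functions with a square integrable piecewise derivative -/

/-- Lebesgue measure on the unit interval. -/
noncomputable abbrev unitMeasure : Measure ℝ := volume.restrict (Ioc (0:ℝ) 1)

/-- `v` is continuous on `[0,1]`, vanishes at the endpoints, and has the square integrable
derivative `d` off a countable set: a concrete stand-in for `v ∈ H¹₀(0,1)` with weak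
derivative `d`. -/
structure HasPwDeriv (v d : ℝ → ℝ) : Prop where
  cont : ContinuousOn v (Icc 0 1)
  zero : v 0 = 0
  one : v 1 = 0
  der : ∃ S : Set ℝ, S.Countable ∧ ∀ x ∈ Ioo (0:ℝ) 1 \ S, HasDerivAt v (d x) x
  mem : MemLp d 2 unitMeasure

lemma memLp_of_continuousOn {v : ℝ → ℝ} (hv : ContinuousOn v (Icc 0 1)) :
    MemLp v 2 unitMeasure := by
  obtain ⟨C, hC⟩ := isCompact_Icc.exists_bound_of_continuousOn hv
  refine MemLp.of_bound ((hv.mono Ioc_subset_Icc_self).aestronglyMeasurable measurableSet_Ioc) C ?_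
  exact (ae_restrict_iff' measurableSet_Ioc).2 (.of_forall fun x hx => hC x (Ioc_subset_Icc_self hx))

lemma integral_eq_unit (g : ℝ → ℝ) : ∫ x in (0:ℝ)..1, g x = ∫ x, g x ∂unitMeasure :=
  intervalIntegral.integral_of_le zero_le_one

lemma HasPwDeriv.memLp {v d : ℝ → ℝ} (h : HasPwDeriv v d) : MemLp v 2 unitMeasure :=
  memLp_of_continuousOn h.cont

lemma integrable_mul_of_memLp {f g : ℝ → ℝ} (hf : MemLp f 2 unitMeasure)
    (hg : MemLp g 2 unitMeasure) : Integrable (fun x => f x * g x) unitMeasure :=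
  hf.integrable_mul hg

lemma integrable_of_memLp {f : ℝ → ℝ} (hf : MemLp f 2 unitMeasure) : Integrable f unitMeasure :=
  hf.integrable (by norm_num)

lemma HasPwDeriv.sub {v d w s : ℝ → ℝ} (h : HasPwDeriv v d) (k : HasPwDeriv w s) :
    HasPwDeriv (fun x => v x - w x) (fun x => d x - s x) := by
  obtain ⟨S, hS, hS'⟩ := h.der
  obtain ⟨T, hT, hT'⟩ := k.der
  refine ⟨h.cont.sub k.cont, by simp [h.zero, k.zero], by simp [h.one, k.one],
    ⟨S ∪ T, hS.union hT, fun x hx => ?_⟩, h.mem.sub k.mem⟩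
  exact (hS' x ⟨hx.1, fun hh => hx.2 (.inl hh)⟩).sub (hT' x ⟨hx.1, fun hh => hx.2 (.inr hh)⟩)

lemma HasPwDeriv.integral_deriv {v d : ℝ → ℝ} (h : HasPwDeriv v d) :
    ∫ x, d x ∂unitMeasure = 0 := by
  obtain ⟨S, hS, hS'⟩ := h.der
  have := integral_eq_of_hasDerivAt_off_countable (a := 0) (b := 1) v d hS
    (by simpa using h.cont) (by simpa using hS')
    ((intervalIntegrable_iff_integrableOn_Ioc_of_le zero_le_one).2 (integrable_of_memLp h.mem))
  rw [← integral_eq_unit, this, h.zero, h.one, sub_zero]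

/-- Integration by parts; the boundary terms vanish because of `v` alone, so `w` need not vanish
at the endpoints. -/
lemma HasPwDeriv.integral_by_parts {v d w s : ℝ → ℝ} (h : HasPwDeriv v d)
    (k : ContinuousOn w (Icc 0 1))
    (k' : ∃ S : Set ℝ, S.Countable ∧ ∀ x ∈ Ioo (0:ℝ) 1 \ S, HasDerivAt w (s x) x)
    (km : MemLp s 2 unitMeasure) :
    ∫ x, d x * w x ∂unitMeasure + ∫ x, v x * s x ∂unitMeasure = 0 := by
  obtain ⟨S, hS, hS'⟩ := h.der
  obtain ⟨T, hT, hT'⟩ := k'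
  have i1 := integrable_mul_of_memLp h.mem (memLp_of_continuousOn k)
  have i2 := integrable_mul_of_memLp h.memLp km
  have := integral_eq_of_hasDerivAt_off_countable (a := 0) (b := 1) (fun x => v x * w x)
    (fun x => d x * w x + v x * s x) (hS.union hT)
    (by rw [uIcc_of_le zero_le_one]; exact h.cont.mul k)
    (fun x hx => by
      simp only [zero_le_one, inf_of_le_left, sup_of_le_right] at hx
      exact (hS' x ⟨hx.1, fun hh => hx.2 (.inl hh)⟩).mul
        (hT' x ⟨hx.1, fun hh => hx.2 (.inr hh)⟩))
    ((intervalIntegrable_iff_integrableOn_Ioc_of_le zero_le_one).2 (i1.add i2))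
  rw [← integral_add i1 i2, ← integral_eq_unit, this, h.zero, h.one]
  ring

lemma HasPwDeriv.ae_eq_deriv {v d : ℝ → ℝ} (h : HasPwDeriv v d) :
    deriv v =ᵐ[unitMeasure] d := by
  obtain ⟨S, hS, hS'⟩ := h.der
  refine (ae_restrict_iff' measurableSet_Ioc).2 ?_
  have h1 : ∀ᵐ x : ℝ, x ∉ S := by simpa using hS.ae_notMem volume
  have h2 : ∀ᵐ x : ℝ, x ∉ ({1} : Set ℝ) := by simpa using (countable_singleton (1:ℝ)).ae_notMem volume
  filter_upwards [h1, h2] with x hx hx1 hx2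
  exact (hS' x ⟨⟨hx2.1, lt_of_le_of_ne hx2.2 hx1⟩, hx⟩).deriv

/-! ### The finite element spaces -/

lemma InMh.inQh {n : ℕ} {v : ℝ → ℝ} (h : InMh n v) : InQh n v := by
  refine ⟨h.1, h.2.1, h.2.2.1, fun i h1 h2 => ?_⟩
  obtain ⟨a, c, hac⟩ := h.2.2.2 i h1 h2
  exact ⟨0, a, c, fun x hx => by rw [hac x hx]; ring⟩

/-- Piecewise quadratics have a bounded derivative off the mesh nodes. -/
lemma InQh.hasPwDeriv {n : ℕ} (hn : 2 ≤ n) {v : ℝ → ℝ} (h : InQh n v) :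
    HasPwDeriv v (deriv v) := by
  have hn0 : (0:ℝ) < n := by exact_mod_cast (by omega : 0 < n)
  obtain ⟨hc, h0, h1, hp⟩ := h
  choose! a b c hq using hp
  have key : ∀ x ∈ Ioo (0:ℝ) 1 \ range (fun i : ℕ => (i:ℝ) / n), ∃ i : ℕ, 1 ≤ i ∧ i ≤ n ∧
      HasDerivAt v (2 * a i * x + b i) x := by
    rintro x ⟨⟨hx0, hx1⟩, hx⟩
    have hnx : 0 < (n:ℝ) * x := by positivity
    have hi1 : 1 ≤ ⌈(n:ℝ) * x⌉₊ := Nat.ceil_pos.2 hnx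
    have hi2 : ⌈(n:ℝ) * x⌉₊ ≤ n := Nat.ceil_le.2 (by nlinarith)
    refine ⟨⌈(n:ℝ) * x⌉₊, hi1, hi2, ?_⟩
    have l1 : ((⌈(n:ℝ) * x⌉₊ : ℝ) - 1) / n < x := by
      rw [div_lt_iff₀ hn0]
      have := Nat.ceil_lt_add_one hnx.le
      linarith
    have l2 : x < (⌈(n:ℝ) * x⌉₊ : ℝ) / n := by
      refine lt_of_le_of_ne ?_ fun hh => hx ⟨_, hh.symm⟩
      rw [le_div_iff₀ hn0]
      have := Nat.le_ceil ((n:ℝ) * x)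
      linarith
    generalize ⌈(n:ℝ) * x⌉₊ = i at *
    have hd : HasDerivAt (fun y => a i * y ^ 2 + b i * y + c i) (2 * a i * x + b i) x := by
      have := (((hasDerivAt_pow 2 x).const_mul (a i)).add
        ((hasDerivAt_id x).const_mul (b i))).add_const (c i)
      exact this.congr_deriv (by push_cast; ring)
    refine hd.congr_of_eventuallyEq ?_
    filter_upwards [Icc_mem_nhds l1 l2] with y hy using hq i hi1 hi2 y hy
  refine ⟨hc, h0, h1, ⟨range (fun i : ℕ => (i:ℝ) / n), countable_range _, fun x hx => ?_⟩, ?_⟩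
  · obtain ⟨i, _, _, hd⟩ := key x hx
    rwa [hd.deriv]
  · refine MemLp.of_bound (measurable_deriv v).aestronglyMeasurable
      (∑ i ∈ Finset.range (n + 1), (2 * |a i| + |b i|)) ?_
    refine (ae_restrict_iff' measurableSet_Ioc).2 ?_
    have h1 : ∀ᵐ x : ℝ, x ∉ range (fun i : ℕ => (i:ℝ) / n) := by
      simpa using (countable_range (fun i : ℕ => (i:ℝ) / n)).ae_notMem volume
    have h2 : ∀ᵐ x : ℝ, x ∉ ({1} : Set ℝ) := by
      simpa using (countable_singleton (1:ℝ)).ae_notMem volume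
    filter_upwards [h1, h2] with x hx hx1 hx2
    obtain ⟨i, _, hi, hd⟩ := key x ⟨⟨hx2.1, lt_of_le_of_ne hx2.2 hx1⟩, hx⟩
    rw [hd.deriv, Real.norm_eq_abs]
    refine le_trans ?_ (Finset.single_le_sum (f := fun i => 2 * |a i| + |b i|)
      (fun j _ => by positivity) (Finset.mem_range.2 (Nat.lt_succ_of_le hi)))
    refine (abs_add_le _ _).trans ?_
    rw [abs_mul, abs_mul, abs_two, abs_of_pos hx2.1]
    have := mul_le_mul_of_nonneg_left hx2.2 (by positivity : 0 ≤ 2 * |a i|)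
    linarith

/-! ### The optimal test function -/

/-- The optimal test function `T q`, with derivative `ε q' - q + q̄`. -/
noncomputable def optimalTest (ε : ℝ) (q : ℝ → ℝ) (x : ℝ) : ℝ :=
  ε * q x - (∫ t in (0:ℝ)..x, q t) + (∫ t in (0:ℝ)..1, q t) * x

lemma intervalIntegrable_of_cont {q : ℝ → ℝ} (hq : ContinuousOn q (Icc 0 1)) {x y : ℝ}
    (hx : x ∈ Icc (0:ℝ) 1) (hy : y ∈ Icc (0:ℝ) 1) : IntervalIntegrable q volume x y :=
  (hq.mono (uIcc_subset_Icc hx hy)).intervalIntegrable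

lemma inQh_optimalTest {n : ℕ} (hn : 2 ≤ n) (ε : ℝ) {q : ℝ → ℝ} (hq : InMh n q) :
    InQh n (optimalTest ε q) := by
  have hn0 : (0:ℝ) < n := by exact_mod_cast (by omega : 0 < n)
  obtain ⟨hc, h0, h1, hp⟩ := hq
  refine ⟨?_, by simp [optimalTest, h0], by simp [optimalTest, h1], fun i hi1 hi2 => ?_⟩
  · have hprim : ContinuousOn (fun x => ∫ t in (0:ℝ)..x, q t) (Icc 0 1) := by
      have := intervalIntegral.continuousOn_primitive_interval (a := 0) (b := 1) (f := q)
        (μ := volume) (by simpa using hc.integrableOn_Icc)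
      simpa using this
    unfold optimalTest
    fun_prop
  · obtain ⟨a, c, hac⟩ := hp i hi1 hi2
    have hi1' : (1:ℝ) ≤ i := by exact_mod_cast hi1
    have hi2' : (i:ℝ) ≤ n := by exact_mod_cast hi2
    set l : ℝ := ((i:ℝ) - 1) / n with hl
    have l0 : 0 ≤ l := div_nonneg (by linarith) hn0.le
    have r1 : (i:ℝ) / n ≤ 1 := (div_le_one hn0).2 hi2'
    refine ⟨-a / 2, ε * a - c + ∫ t in (0:ℝ)..1, q t,
      ε * c - (∫ t in (0:ℝ)..l, q t) + a * l ^ 2 / 2 + c * l, fun x hx => ?_⟩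
    have hlI : l ∈ Icc (0:ℝ) 1 := ⟨l0, hx.1.trans (hx.2.trans r1)⟩
    have hxI : x ∈ Icc (0:ℝ) 1 := ⟨l0.trans hx.1, hx.2.trans r1⟩
    have hsplit := intervalIntegral.integral_add_adjacent_intervals
      (intervalIntegrable_of_cont hc (left_mem_Icc.2 zero_le_one) hlI)
      (intervalIntegrable_of_cont hc hlI hxI)
    have hlx : ∫ t in l..x, q t = a * (x ^ 2 - l ^ 2) / 2 + c * (x - l) := by
      have : ∫ t in l..x, q t = ∫ t in l..x, (a * t + c) := by
        refine intervalIntegral.integral_congr fun t ht => hac t ?_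
        rw [uIcc_of_le hx.1] at ht
        exact ⟨ht.1, ht.2.trans hx.2⟩
      rw [this, intervalIntegral.integral_add
          (Continuous.intervalIntegrable (by fun_prop) _ _)
          (Continuous.intervalIntegrable (by fun_prop) _ _),
        intervalIntegral.integral_const_mul, integral_id, intervalIntegral.integral_const,
        smul_eq_mul]
      ring
    rw [optimalTest, ← hsplit, hlx, hac x hx]
    ring

lemma hasPwDeriv_optimalTest (ε : ℝ) {q d : ℝ → ℝ} (h : HasPwDeriv q d)
    (hT : ContinuousOn (optimalTest ε q) (Icc 0 1)) :
    HasPwDeriv (optimalTest ε q)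
      (fun x => ε * d x - q x + ∫ t, q t ∂unitMeasure) := by
  obtain ⟨S, hS, hS'⟩ := h.der
  refine ⟨hT, by simp [optimalTest, h.zero], by simp [optimalTest, h.one],
    ⟨S, hS, fun x hx => ?_⟩, ?_⟩
  · have hI : Icc (0:ℝ) 1 ∈ nhds x := Icc_mem_nhds hx.1.1 hx.1.2
    have hprim := intervalIntegral.integral_hasDerivAt_right
      (intervalIntegrable_of_cont h.cont (left_mem_Icc.2 zero_le_one) (Ioo_subset_Icc_self hx.1))
      ⟨_, hI, h.cont.aestronglyMeasurable measurableSet_Icc⟩ (h.cont.continuousAt hI)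
    have := (((hS' x hx).const_mul ε).sub hprim).add
      ((hasDerivAt_id x).const_mul (∫ t in (0:ℝ)..1, q t))
    rw [← integral_eq_unit]
    rw [mul_one] at this
    exact this
  · exact ((h.mem.const_mul ε).sub h.memLp).add (memLp_const _)

/-- Pairing with `(T q)' = ε q' - q + q̄`. -/
lemma integral_mul_optimalTest (ε m : ℝ) {g q d : ℝ → ℝ} (hg : MemLp g 2 unitMeasure)
    (hq : MemLp q 2 unitMeasure) (hd : MemLp d 2 unitMeasure) :
    ∫ x, g x * (ε * d x - q x + m) ∂unitMeasure =
      ε * ∫ x, g x * d x ∂unitMeasure - ∫ x, g x * q x ∂unitMeasure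
        + m * ∫ x, g x ∂unitMeasure := by
  have i1 := (integrable_mul_of_memLp hg hd).const_mul ε
  have i2 := integrable_mul_of_memLp hg hq
  have i3 := (integrable_of_memLp hg).const_mul m
  rw [← integral_const_mul, ← integral_const_mul, ← integral_sub i1 i2,
    ← integral_add (f := fun x => ε * (g x * d x) - g x * q x) (i1.sub i2) i3]
  congr 1 with x
  ring

/-! ### Orthogonality and best approximation -/

/-- The discretization error is orthogonal to `M_h` in the optimal trial inner product. -/
lemma galerkin_orthogonality (n : ℕ) (hn : 2 ≤ n) (ε : ℝ)
    (f u u' u'' : ℝ → ℝ) (hu : HasPwDeriv u u')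
    (hu'c : ContinuousOn u' (Icc 0 1))
    (hu' : ∀ x ∈ Ioo (0:ℝ) 1, HasDerivAt u' (u'' x) x)
    (hu'' : ContinuousOn u'' (Icc 0 1))
    (hode : ∀ x ∈ Icc (0:ℝ) 1, -ε * u'' x + u' x = f x)
    (wh uh : ℝ → ℝ) (hwh : InQh n wh) (huh : InMh n uh)
    (heq1 : ∀ vh : ℝ → ℝ, InQh n vh →
      (∫ x in (0:ℝ)..1, deriv wh x * deriv vh x) +
        ε * (∫ x in (0:ℝ)..1, deriv uh x * deriv vh x) +
        (∫ x in (0:ℝ)..1, deriv uh x * vh x) = ∫ x in (0:ℝ)..1, f x * vh x)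
    (heq2 : ∀ qh : ℝ → ℝ, InMh n qh →
      ε * (∫ x in (0:ℝ)..1, deriv qh x * deriv wh x) +
        (∫ x in (0:ℝ)..1, deriv qh x * wh x) = 0)
    (q : ℝ → ℝ) (hq : InMh n q) :
    ε ^ 2 * ∫ x, (u' x - deriv uh x) * deriv q x ∂unitMeasure
      + ∫ x, (u x - uh x) * q x ∂unitMeasure
      - (∫ x, (u x - uh x) ∂unitMeasure) * ∫ x, q x ∂unitMeasure = 0 := by
  have hQ := hq.inQh.hasPwDeriv hn
  have hW := hwh.hasPwDeriv hn
  have hU := huh.inQh.hasPwDeriv hn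
  have hTQ := inQh_optimalTest hn ε hq
  have hT := hasPwDeriv_optimalTest ε hQ hTQ.1
  have hE := hu.sub hU
  have hae := hT.ae_eq_deriv
  have e1 := heq1 _ hTQ
  have e2 := heq2 q hq
  simp only [integral_eq_unit] at e1 e2
  set g := optimalTest ε q with hg
  set m := ∫ x, q x ∂unitMeasure with hm
  set g' : ℝ → ℝ := fun x => ε * deriv q x - q x + m with hg'
  have r (p : ℝ → ℝ) : ∫ x, p x * deriv g x ∂unitMeasure = ∫ x, p x * g' x ∂unitMeasure :=
    integral_congr_ae (hae.mono fun x hx => by simp only [hx])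
  rw [r, r] at e1
  -- the `w_h` term drops out
  have w1 : ∫ x, deriv wh x * g' x ∂unitMeasure = 0 := by
    have := integral_mul_optimalTest ε m hW.mem hQ.memLp hQ.mem
    rw [hW.integral_deriv] at this
    have p := hW.integral_by_parts hQ.cont hQ.der hQ.mem
    have c1 : ∫ x, deriv q x * deriv wh x ∂unitMeasure
        = ∫ x, deriv wh x * deriv q x ∂unitMeasure := by simp only [mul_comm]
    have c2 : ∫ x, deriv q x * wh x ∂unitMeasure
        = ∫ x, wh x * deriv q x ∂unitMeasure := by simp only [mul_comm]
    rw [c1, c2] at e2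
    linarith
  -- weak form of the differential equation
  have hu''m := memLp_of_continuousOn hu''
  have f1 : ∫ x, f x * g x ∂unitMeasure =
      ε * ∫ x, u' x * g' x ∂unitMeasure + ∫ x, u' x * g x ∂unitMeasure := by
    have p := hT.integral_by_parts hu'c ⟨∅, countable_empty, fun x hx => hu' x hx.1⟩ hu''m
    have c1 : ∫ x, g' x * u' x ∂unitMeasure = ∫ x, u' x * g' x ∂unitMeasure := by
      simp only [mul_comm]
    have i1 := (integrable_mul_of_memLp hT.memLp hu''m).const_mul (-ε)
    have i2 := integrable_mul_of_memLp hu.mem hT.memLp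
    have : ∫ x, f x * g x ∂unitMeasure =
        ∫ x, (-ε * (g x * u'' x) + u' x * g x) ∂unitMeasure := by
      refine setIntegral_congr_fun measurableSet_Ioc fun x hx => ?_
      simp only [← hode x (Ioc_subset_Icc_self hx)]
      ring
    rw [this, integral_add i1 i2, integral_const_mul]
    rw [c1] at p
    linear_combination (-ε) * p
  have s1 : ∫ x, (u' x - deriv uh x) * g' x ∂unitMeasure =
      ∫ x, u' x * g' x ∂unitMeasure - ∫ x, deriv uh x * g' x ∂unitMeasure := by
    rw [← integral_sub (integrable_mul_of_memLp hu.mem hT.mem)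
      (integrable_mul_of_memLp hU.mem hT.mem)]
    simp only [sub_mul]
  have s2 : ∫ x, (u' x - deriv uh x) * g x ∂unitMeasure =
      ∫ x, u' x * g x ∂unitMeasure - ∫ x, deriv uh x * g x ∂unitMeasure := by
    rw [← integral_sub (integrable_mul_of_memLp hu.mem hT.memLp)
      (integrable_mul_of_memLp hU.mem hT.memLp)]
    simp only [sub_mul]
  have p1 := hE.integral_by_parts hT.cont hT.der hT.mem
  have p2 := hE.integral_by_parts hQ.cont hQ.der hQ.mem
  have x1 := integral_mul_optimalTest ε m hE.mem hQ.memLp hQ.mem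
  have x2 := integral_mul_optimalTest ε m hE.memLp hQ.memLp hQ.mem
  rw [hE.integral_deriv] at x1
  linear_combination (-ε) * x1 + x2 + ε * s1 + s2 - p1 + ε * p2 + w1 - e1 - f1

/-- Pythagoras for the optimal trial norm: adding a `q` orthogonal to `e` does not decrease it. -/
lemma starForm_le_of_orthogonal (ε : ℝ) {e e' q q' : ℝ → ℝ}
    (he : MemLp e 2 unitMeasure) (he' : MemLp e' 2 unitMeasure)
    (hq : MemLp q 2 unitMeasure) (hq' : MemLp q' 2 unitMeasure)
    (horth : ε ^ 2 * ∫ x, e' x * q' x ∂unitMeasure + ∫ x, e x * q x ∂unitMeasure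
      - (∫ x, e x ∂unitMeasure) * ∫ x, q x ∂unitMeasure = 0) :
    ε ^ 2 * ∫ x, e' x ^ 2 ∂unitMeasure + ∫ x, e x ^ 2 ∂unitMeasure
        - (∫ x, e x ∂unitMeasure) ^ 2 ≤
      ε ^ 2 * ∫ x, (e' x + q' x) ^ 2 ∂unitMeasure + ∫ x, (e x + q x) ^ 2 ∂unitMeasure
        - (∫ x, (e x + q x) ∂unitMeasure) ^ 2 := by
  have expand {a b : ℝ → ℝ} (ha : MemLp a 2 unitMeasure) (hb : MemLp b 2 unitMeasure) :
      ∫ x, (a x + b x) ^ 2 ∂unitMeasure = ∫ x, a x ^ 2 ∂unitMeasure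
        + 2 * ∫ x, a x * b x ∂unitMeasure + ∫ x, b x ^ 2 ∂unitMeasure := by
    have i2 := (integrable_mul_of_memLp ha hb).const_mul 2
    rw [← integral_const_mul, ← integral_add ha.integrable_sq i2,
      ← integral_add (f := fun x => a x ^ 2 + 2 * (a x * b x))
        (ha.integrable_sq.add i2) hb.integrable_sq]
    congr 1 with x
    ring
  have cs : (∫ x, q x ∂unitMeasure) ^ 2 ≤ ∫ x, q x ^ 2 ∂unitMeasure := by
    set m := ∫ x, q x ∂unitMeasure with hm
    have h := expand hq (memLp_const (-m))
    have h0 : 0 ≤ ∫ x, (q x + -m) ^ 2 ∂unitMeasure := integral_nonneg fun x => sq_nonneg _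
    rw [integral_mul_const, integral_const, ← hm] at h
    simp at h
    nlinarith
  have n1 : 0 ≤ ∫ x, q' x ^ 2 ∂unitMeasure := integral_nonneg fun x => sq_nonneg _
  have n2 := mul_nonneg (sq_nonneg ε) n1
  rw [expand he' hq', expand he hq, integral_add (integrable_of_memLp he) (integrable_of_memLp hq)]
  nlinarith

/-- Optimal error estimate in the optimal trial norm
`‖w‖_*² = ε²|w|² + ‖w‖² - w̄²` for the `P¹-P²` saddle point least squares
discretization of `-εu'' + u' = f`, `u(0)=u(1)=0`. -/
theorem stmt9 (n : ℕ) (hn : 2 ≤ n) (ε : ℝ) (hε : 0 < ε)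
    (f : ℝ → ℝ) (hf : ContinuousOn f (Set.Icc 0 1))
    (u u' u'' : ℝ → ℝ)
    (hu : ∀ x ∈ Set.Icc (0:ℝ) 1, HasDerivWithinAt u (u' x) (Set.Icc 0 1) x)
    (hu' : ∀ x ∈ Set.Icc (0:ℝ) 1, HasDerivWithinAt u' (u'' x) (Set.Icc 0 1) x)
    (hu'' : ContinuousOn u'' (Set.Icc 0 1))
    (hode : ∀ x ∈ Set.Icc (0:ℝ) 1, -ε * u'' x + u' x = f x)
    (hu0 : u 0 = 0) (hu1 : u 1 = 0)
    (wh uh : ℝ → ℝ) (hwh : InQh n wh) (huh : InMh n uh)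
    (heq1 : ∀ vh : ℝ → ℝ, InQh n vh →
      (∫ x in (0:ℝ)..1, deriv wh x * deriv vh x) +
        ε * (∫ x in (0:ℝ)..1, deriv uh x * deriv vh x) +
        (∫ x in (0:ℝ)..1, deriv uh x * vh x) = ∫ x in (0:ℝ)..1, f x * vh x)
    (heq2 : ∀ qh : ℝ → ℝ, InMh n qh →
      ε * (∫ x in (0:ℝ)..1, deriv qh x * deriv wh x) +
        (∫ x in (0:ℝ)..1, deriv qh x * wh x) = 0) :
    ∀ ph : ℝ → ℝ, InMh n ph →
      ε^2 * (∫ x in (0:ℝ)..1, (u' x - deriv uh x)^2) +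
          (∫ x in (0:ℝ)..1, (u x - uh x)^2) - (∫ x in (0:ℝ)..1, (u x - uh x))^2 ≤
        ε^2 * (∫ x in (0:ℝ)..1, (u' x - deriv ph x)^2) +
          (∫ x in (0:ℝ)..1, (u x - ph x)^2) - (∫ x in (0:ℝ)..1, (u x - ph x))^2 := by
  intro ph hph
  have hnhds : ∀ x ∈ Ioo (0:ℝ) 1, Icc (0:ℝ) 1 ∈ nhds x := fun x hx => Icc_mem_nhds hx.1 hx.2
  have hu'c : ContinuousOn u' (Icc 0 1) := fun x hx => (hu' x hx).continuousWithinAt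
  have hU : HasPwDeriv u u' :=
    ⟨fun x hx => (hu x hx).continuousWithinAt, hu0, hu1,
      ⟨∅, countable_empty, fun x hx =>
        (hu x (Ioo_subset_Icc_self hx.1)).hasDerivAt (hnhds x hx.1)⟩, memLp_of_continuousOn hu'c⟩
  have orth := galerkin_orthogonality n hn ε f u u' u'' hU hu'c
    (fun x hx => (hu' x (Ioo_subset_Icc_self hx)).hasDerivAt (hnhds x hx)) hu'' hode wh uh hwh huh
    heq1 heq2
  have hV := huh.inQh.hasPwDeriv hn
  have hP := hph.inQh.hasPwDeriv hn
  have hE := hU.sub hV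
  have hD := hV.sub hP
  have split {a b c : ℝ → ℝ} (ha : MemLp a 2 unitMeasure) (hb : MemLp b 2 unitMeasure)
      (hc : MemLp c 2 unitMeasure) : ∫ x, a x * (b x - c x) ∂unitMeasure =
      ∫ x, a x * b x ∂unitMeasure - ∫ x, a x * c x ∂unitMeasure := by
    rw [← integral_sub (integrable_mul_of_memLp ha hb) (integrable_mul_of_memLp ha hc)]
    simp only [mul_sub]
  have key := starForm_le_of_orthogonal ε hE.memLp hE.mem hD.memLp hD.mem (by
    rw [split hE.mem hV.mem hP.mem, split hE.memLp hV.memLp hP.memLp,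
      integral_sub (integrable_of_memLp hV.memLp) (integrable_of_memLp hP.memLp)]
    linear_combination orth uh huh - orth ph hph)
  simp only [sub_add_sub_cancel] at key
  simpa only [integral_eq_unit] using key
end

section
/- Fix an integer n ≥ 2 and set h = 1/n and x_i = i·h (i = 0,…,n). Let M_h denote the space of continuous functions v : [0,1] → ℝ with v(0) = v(1) = 0 that are affine on each subinterval [x_{i−1}, x_i]. Let B : [0,h] → ℝ be continuously differentiable with B(0) = B(h) = 0, ∫_0^h B(x) dx = b₁·h and ∫_0^h (B′(x))² dx = b₂/h, where b₁ > 0 and b₂ > 0. For i = 1,…,n define B_i : [0,1] → ℝ by B_i(x) = B(x − x_{i−1}) for x ∈ [x_{i−1}, x_i] and B_i(x) = 0 otherwise. Then for every w_h ∈ M_h, setting v_h := w_h + Σ_{i=1}^n (w_h(x_i) − w_h(x_{i−1}))·B_i, one has ∫_0^1 (v_h′(x))² dx = (1 + b₂)·∫_0^1 (w_h′(x))² dx. -/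
/-- The bubble `B_i` supported on `[x_{i-1}, x_i]`, obtained by translating `B`. -/
noncomputable def bubbleI (n : ℕ) (B : ℝ → ℝ) (i : ℕ) : ℝ → ℝ := fun x =>
  if x ∈ Set.Icc (((i : ℝ) - 1) / n) ((i : ℝ) / n) then B (x - ((i : ℝ) - 1) / n) else 0

/-- The bubble modification `w + Σ_{i=1}^n (w(x_i) - w(x_{i-1})) B_i` of `w`. -/
noncomputable def bubbleMod (n : ℕ) (B : ℝ → ℝ) (w : ℝ → ℝ) : ℝ → ℝ := fun x =>
  w x + ∑ i ∈ Finset.Icc 1 n, (w ((i : ℝ) / n) - w (((i : ℝ) - 1) / n)) * bubbleI n B i x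

/-- On the open mesh cell `(k/n, (k+1)/n)` only the bubble with index `k+1` is active, so there
`w` has constant slope `a` and its modification has slope `a + (a/n) B'`. -/
lemma cell_deriv (n : ℕ) (hn : 2 ≤ n) (B B' : ℝ → ℝ)
    (hB : ∀ x ∈ Set.Icc (0:ℝ) (1 / n), HasDerivWithinAt B (B' x) (Set.Icc 0 (1 / n)) x)
    (w : ℝ → ℝ) (hw : InMh n w) (k : ℕ) (hk : k < n) :
    ∃ a : ℝ, ∀ x ∈ Set.Ioo ((k : ℝ) / n) (((k + 1 : ℕ) : ℝ) / n),
      deriv w x = a ∧ deriv (bubbleMod n B w) x = a + a / n * B' (x - (k : ℝ) / n) := by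
  have hn0 : (0 : ℝ) < n := by exact_mod_cast (by omega : 0 < n)
  obtain ⟨a, c, hac⟩ := hw.2.2.2 (k + 1) (by omega) (by omega)
  have hk1 : (((k + 1 : ℕ) : ℝ) - 1) / n = (k : ℝ) / n := by push_cast; ring
  have hlen : ((k + 1 : ℕ) : ℝ) / n = (k : ℝ) / n + 1 / n := by push_cast; ring
  have hpos : (0 : ℝ) < 1 / n := by positivity
  rw [hk1] at hac
  have hslope : w (((k + 1 : ℕ) : ℝ) / n) - w ((k : ℝ) / n) = a / n := by
    rw [hac _ ⟨by linarith, le_rfl⟩, hac _ ⟨le_rfl, by linarith⟩, hlen]; ring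
  refine ⟨a, fun x hx => ?_⟩
  have hnhds : Set.Ioo ((k : ℝ) / n) (((k + 1 : ℕ) : ℝ) / n) ∈ nhds x :=
    isOpen_Ioo.mem_nhds hx
  have hlin : HasDerivAt (fun y : ℝ => a * y + c) a x := by
    simpa using ((hasDerivAt_id x).const_mul a).add_const c
  have hwev : w =ᶠ[nhds x] fun y => a * y + c := by
    filter_upwards [hnhds] with y hy using hac y (Set.Ioo_subset_Icc_self hy)
  have hvev : bubbleMod n B w =ᶠ[nhds x]
      fun y => (a * y + c) + a / n * B (y - (k : ℝ) / n) := by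
    filter_upwards [hnhds] with y hy
    simp only [bubbleMod]
    rw [hac y (Set.Ioo_subset_Icc_self hy), Finset.sum_eq_single (k + 1)]
    · have hmem : y ∈ Set.Icc ((((k + 1 : ℕ) : ℝ) - 1) / n) (((k + 1 : ℕ) : ℝ) / n) := by
        rw [hk1]; exact Set.Ioo_subset_Icc_self hy
      rw [bubbleI, if_pos hmem, hk1, hslope]
    · intro i _ hi
      rw [bubbleI, if_neg, mul_zero]
      rintro ⟨h1, h2⟩
      have h3 := lt_of_le_of_lt h1 hy.2
      have h4 := lt_of_lt_of_le hy.1 h2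
      rw [div_lt_div_iff_of_pos_right hn0] at h3 h4
      have h5 : i < k + 1 + 1 := by
        have : (i : ℝ) < ((k + 1 + 1 : ℕ) : ℝ) := by push_cast at h3 ⊢; linarith
        exact_mod_cast this
      have h6 : k < i := by exact_mod_cast h4
      omega
    · intro h
      exact absurd (Finset.mem_Icc.mpr ⟨by omega, by omega⟩) h
  have hxm : x - (k : ℝ) / n ∈ Set.Ioo (0 : ℝ) (1 / n) :=
    ⟨by linarith [hx.1], by linarith [hx.2]⟩
  have hBx : HasDerivAt B (B' (x - (k : ℝ) / n)) (x - (k : ℝ) / n) :=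
    (hB _ (Set.Ioo_subset_Icc_self hxm)).hasDerivAt (Icc_mem_nhds hxm.1 hxm.2)
  refine ⟨hwev.deriv_eq.trans hlin.deriv, hvev.deriv_eq.trans ?_⟩
  exact (hlin.add ((hBx.comp_sub_const x _).const_mul (a / n))).deriv

/-- Expanding the square on one cell: the cross term vanishes because `∫ B' = B(h) - B(0) = 0`. -/
lemma cell_integral (n : ℕ) (hn : 2 ≤ n) (B B' : ℝ → ℝ) (b₂ : ℝ)
    (hB : ∀ x ∈ Set.Icc (0:ℝ) (1 / n), HasDerivWithinAt B (B' x) (Set.Icc 0 (1 / n)) x)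
    (hB' : ContinuousOn B' (Set.Icc 0 (1 / n)))
    (hB0 : B 0 = 0) (hBh : B (1 / n) = 0)
    (hB'int : ∫ x in (0:ℝ)..(1 / n), (B' x)^2 = b₂ / (1 / n)) (a : ℝ) :
    ∫ x in (0:ℝ)..(1 / n), (a + a / n * B' x) ^ 2 = (1 + b₂) * (a ^ 2 / n) := by
  have hn0 : (0 : ℝ) < n := by exact_mod_cast (by omega : 0 < n)
  have hpos : (0 : ℝ) ≤ 1 / n := by positivity
  have hc : ContinuousOn B' (Set.uIcc 0 (1 / (n : ℝ))) := by rwa [Set.uIcc_of_le hpos]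
  have hi1 : IntervalIntegrable B' MeasureTheory.volume 0 (1 / (n : ℝ)) := hc.intervalIntegrable
  have hi2 : IntervalIntegrable (fun x => B' x ^ 2) MeasureTheory.volume 0 (1 / (n : ℝ)) :=
    (hc.pow 2).intervalIntegrable
  have hzero : ∫ x in (0:ℝ)..(1 / n), B' x = 0 := by
    rw [intervalIntegral.integral_eq_sub_of_hasDerivAt_of_le hpos
      (fun x hx => (hB x hx).continuousWithinAt)
      (fun x hx => (hB x (Set.Ioo_subset_Icc_self hx)).hasDerivAt (Icc_mem_nhds hx.1 hx.2)) hi1,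
      hB0, hBh, sub_zero]
  have hexp : (fun x => (a + a / n * B' x) ^ 2) =
      fun x => (a ^ 2 + (2 * a ^ 2 / n) * B' x) + (a ^ 2 / n ^ 2) * B' x ^ 2 := by
    funext x; field_simp; ring
  rw [hexp, intervalIntegral.integral_add
      ((intervalIntegrable_const).add (hi1.const_mul _)) (hi2.const_mul _),
    intervalIntegral.integral_add intervalIntegrable_const (hi1.const_mul _),
    intervalIntegral.integral_const, intervalIntegral.integral_const_mul,
    intervalIntegral.integral_const_mul, hzero, hB'int]
  simp only [smul_eq_mul]
  field_simp
  ring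

/-- The energy norm of a bubble-modified test function is a fixed
multiple of the energy norm of its linear part:
`∫(v_h')² = (1 + b₂)∫(w_h')²` where `v_h = w_h + Σ (w_h(x_i) - w_h(x_{i-1}))B_i`. -/
theorem stmt12 (n : ℕ) (hn : 2 ≤ n)
    (B B' : ℝ → ℝ) (b₁ b₂ : ℝ) (hb₁ : 0 < b₁) (hb₂ : 0 < b₂)
    (hB : ∀ x ∈ Set.Icc (0:ℝ) (1 / n), HasDerivWithinAt B (B' x) (Set.Icc 0 (1 / n)) x)
    (hB' : ContinuousOn B' (Set.Icc 0 (1 / n)))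
    (hB0 : B 0 = 0) (hBh : B (1 / n) = 0)
    (hBint : ∫ x in (0:ℝ)..(1 / n), B x = b₁ * (1 / n))
    (hB'int : ∫ x in (0:ℝ)..(1 / n), (B' x)^2 = b₂ / (1 / n))
    (wh : ℝ → ℝ) (hwh : InMh n wh) :
    ∫ x in (0:ℝ)..1, (deriv (bubbleMod n B wh) x)^2 =
      (1 + b₂) * ∫ x in (0:ℝ)..1, (deriv wh x)^2 := by
  have hn0 : (0 : ℝ) < n := by exact_mod_cast (by omega : 0 < n)
  have hpos : (0 : ℝ) ≤ 1 / n := by positivity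
  have hlen : ∀ k : ℕ, ((k + 1 : ℕ) : ℝ) / n = (k : ℝ) / n + 1 / n := fun k => by
    push_cast; ring
  have hle : ∀ k : ℕ, (k : ℝ) / n ≤ ((k + 1 : ℕ) : ℝ) / n := fun k => by
    rw [hlen]; linarith
  have hsplit : ∀ f : ℝ → ℝ, (∀ k < n, IntervalIntegrable f MeasureTheory.volume
      ((k : ℝ) / n) (((k + 1 : ℕ) : ℝ) / n)) →
      ∫ x in (0:ℝ)..1, f x =
        ∑ k ∈ Finset.range n, ∫ x in ((k : ℝ) / n)..(((k + 1 : ℕ) : ℝ) / n), f x := by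
    intro f hf
    have h := intervalIntegral.sum_integral_adjacent_intervals
      (a := fun k : ℕ => (k : ℝ) / n) (n := n) (f := f) hf
    simp only [Nat.cast_zero, zero_div, div_self hn0.ne'] at h
    exact h.symm
  -- Both derivatives may take junk values at the nodes; these are null, so only the open cells
  -- matter, where each derivative agrees with a function continuous on the closed cell.
  have hcell : ∀ k < n,
      IntervalIntegrable (fun x => deriv (bubbleMod n B wh) x ^ 2) MeasureTheory.volume
        ((k : ℝ) / n) (((k + 1 : ℕ) : ℝ) / n) ∧
      IntervalIntegrable (fun x => deriv wh x ^ 2) MeasureTheory.volume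
        ((k : ℝ) / n) (((k + 1 : ℕ) : ℝ) / n) ∧
      ∫ x in ((k : ℝ) / n)..(((k + 1 : ℕ) : ℝ) / n), deriv (bubbleMod n B wh) x ^ 2 =
        (1 + b₂) * ∫ x in ((k : ℝ) / n)..(((k + 1 : ℕ) : ℝ) / n), deriv wh x ^ 2 := by
    intro k hk
    obtain ⟨a, ha⟩ := cell_deriv n hn B B' hB wh hwh k hk
    have hw : Set.EqOn (fun _ => a ^ 2) (fun x => deriv wh x ^ 2)
        (Set.uIoo ((k : ℝ) / n) (((k + 1 : ℕ) : ℝ) / n)) := fun x hx => by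
      rw [Set.uIoo_of_le (hle k)] at hx
      simp only [(ha x hx).1]
    have hv : Set.EqOn (fun x => (a + a / n * B' (x - (k : ℝ) / n)) ^ 2)
        (fun x => deriv (bubbleMod n B wh) x ^ 2)
        (Set.uIoo ((k : ℝ) / n) (((k + 1 : ℕ) : ℝ) / n)) := fun x hx => by
      rw [Set.uIoo_of_le (hle k)] at hx
      simp only [(ha x hx).2]
    have hcont : ContinuousOn (fun x => (a + a / n * B' (x - (k : ℝ) / n)) ^ 2)
        (Set.uIcc ((k : ℝ) / n) (((k + 1 : ℕ) : ℝ) / n)) := by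
      rw [Set.uIcc_of_le (hle k)]
      have : ContinuousOn (fun x => B' (x - (k : ℝ) / n))
          (Set.Icc ((k : ℝ) / n) (((k + 1 : ℕ) : ℝ) / n)) :=
        hB'.comp (by fun_prop) fun x hx =>
          ⟨by linarith [hx.1], by linarith [hx.2, hlen k]⟩
      exact (continuousOn_const.add (continuousOn_const.mul this)).pow 2
    refine ⟨hcont.intervalIntegrable.congr_uIoo hv, intervalIntegrable_const.congr_uIoo hw, ?_⟩
    rw [← intervalIntegral.integral_congr_uIoo hv, ← intervalIntegral.integral_congr_uIoo hw,
      intervalIntegral.integral_comp_sub_right (fun y => (a + a / n * B' y) ^ 2) ((k : ℝ) / n),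
      sub_self, hlen, add_sub_cancel_left,
      cell_integral n hn B B' b₂ hB hB' hB0 hBh hB'int a, intervalIntegral.integral_const,
      smul_eq_mul]
    ring
  rw [hsplit _ fun k hk => (hcell k hk).1, hsplit _ fun k hk => (hcell k hk).2.1,
    Finset.mul_sum]
  exact Finset.sum_congr rfl fun k hk => (hcell k (Finset.mem_range.mp hk)).2.2
end

section
/- Fix an integer n ≥ 2 and set h = 1/n and x_i = i·h (i = 0,…,n). Let M_h denote the space of continuous functions v : [0,1] → ℝ with v(0) = v(1) = 0 that are affine on each subinterval [x_{i−1}, x_i]. Let B : [0,h] → ℝ be continuously differentiable with B(0) = B(h) = 0, ∫_0^h B(x) dx = b₁·h and ∫_0^h (B′(x))² dx = b₂/h, where b₁ > 0 and b₂ > 0. For i = 1,…,n define B_i : [0,1] → ℝ by B_i(x) = B(x − x_{i−1}) for x ∈ [x_{i−1}, x_i] and B_i(x) = 0 otherwise, and set V_h := { w + Σ_{i=1}^n (w(x_i) − w(x_{i−1}))·B_i : w ∈ M_h }. For an integrable w : [0,1] → ℝ set σ(w)² := (1/n)·Σ_{i=1}^n ( (1/h)·∫_{x_{i−1}}^{x_i}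 w(x) dx )² − ( ∫_0^1 w(x) dx )². Then for every ε > 0 and every u_h ∈ M_h: sup { ( ε·∫_0^1 u_h′(x)v′(x) dx + ∫_0^1 u_h′(x)v(x) dx )² / ∫_0^1 (v′(x))² dx : v ∈ V_h, v not identically zero } = ( (ε + b₁·h)²·∫_0^1 (u_h′(x))² dx + σ(u_h)² ) / (1 + b₂). -/
/-! ### Reduction to a single cell -/

/-- Integrals over `[0,1]` split over the mesh, each piece being pulled back to `[0, 1/n]`; the
integrand needs to be known only in the interiors of the subintervals. -/
lemma integral_mesh (n : ℕ) (hn : 0 < n) (f : ℝ → ℝ) (G : ℕ → ℝ → ℝ)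
    (hG : ∀ i < n, ContinuousOn (G i) (Set.Icc 0 (1 / (n : ℝ))))
    (hf : ∀ i < n, ∀ y ∈ Set.Ioo (0 : ℝ) (1 / n), f ((i : ℝ) / n + y) = G i y) :
    ∫ x in (0 : ℝ)..1, f x = ∑ i ∈ Finset.range n, ∫ y in (0 : ℝ)..(1 / n), G i y := by
  have hn' : (0 : ℝ) < n := by exact_mod_cast hn
  have hlen : ∀ i : ℕ, (((i + 1 : ℕ) : ℝ) / n) = (i : ℝ) / n + 1 / n := by
    intro i; push_cast; ring
  have hle : ∀ i : ℕ, (i : ℝ) / n ≤ ((i + 1 : ℕ) : ℝ) / n := by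
    intro i; rw [hlen]; have : 0 < 1 / (n : ℝ) := by positivity
    linarith
  have hEq : ∀ i < n, Set.EqOn (fun x => G i (x - (i : ℝ) / n)) f
      (Set.Ioo ((i : ℝ) / n) (((i + 1 : ℕ) : ℝ) / n)) := by
    intro i hi x hx
    rw [hlen] at hx
    have := hf i hi (x - (i : ℝ) / n) ⟨by linarith [hx.1], by linarith [hx.2]⟩
    simp only [← this]
    congr 1; ring
  have hcont : ∀ i < n, ContinuousOn (fun x => G i (x - (i : ℝ) / n))
      (Set.Icc ((i : ℝ) / n) (((i + 1 : ℕ) : ℝ) / n)) := by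
    intro i hi
    refine (hG i hi).comp (by fun_prop) ?_
    intro x hx
    rw [hlen] at hx
    exact ⟨by linarith [hx.1], by linarith [hx.2]⟩
  have hint : ∀ i < n, IntervalIntegrable f MeasureTheory.volume ((i : ℝ) / n)
      (((i + 1 : ℕ) : ℝ) / n) := by
    intro i hi
    have h1 := (hcont i hi).intervalIntegrable_of_Icc (μ := MeasureTheory.volume) (hle i)
    rw [intervalIntegrable_iff_integrableOn_Ioo_of_le (hle i)] at h1 ⊢
    exact h1.congr_fun (hEq i hi) measurableSet_Ioo
  have hs := intervalIntegral.sum_integral_adjacent_intervals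
    (a := fun k : ℕ => (k : ℝ) / n) (f := f) (μ := MeasureTheory.volume) (n := n) hint
  simp only [Nat.cast_zero, zero_div, div_self hn'.ne'] at hs
  rw [← hs]
  refine Finset.sum_congr rfl fun i hi => ?_
  have hi' := Finset.mem_range.mp hi
  have h2 : ∫ x in ((i : ℝ) / n)..(((i + 1 : ℕ) : ℝ) / n), f x
      = ∫ x in ((i : ℝ) / n)..(((i + 1 : ℕ) : ℝ) / n), G i (x - (i : ℝ) / n) := by
    rw [intervalIntegral.integral_of_le (hle i), intervalIntegral.integral_of_le (hle i),
      MeasureTheory.integral_Ioc_eq_integral_Ioo, MeasureTheory.integral_Ioc_eq_integral_Ioo]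
    exact MeasureTheory.setIntegral_congr_fun measurableSet_Ioo (hEq i hi').symm
  rw [h2, intervalIntegral.integral_comp_sub_right (fun y => G i y)]
  congr 1
  · ring
  · rw [hlen]; ring

lemma InMh.formula {n : ℕ} (hn : 0 < n) {w : ℝ → ℝ} (hw : InMh n w) {i : ℕ} (hi : i < n)
    {y : ℝ} (hy : y ∈ Set.Icc (0 : ℝ) (1 / n)) :
    w ((i : ℝ) / n + y)
      = w ((i : ℝ) / n) + n * y * (w (((i + 1 : ℕ) : ℝ) / n) - w ((i : ℝ) / n)) := by
  have hn' : (0 : ℝ) < n := by exact_mod_cast hn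
  obtain ⟨a, c, h⟩ := hw.2.2.2 (i + 1) (by omega) (by omega)
  have hlen : (((i + 1 : ℕ) : ℝ) / n) = (i : ℝ) / n + 1 / n := by push_cast; ring
  have hl : ((((i + 1 : ℕ) : ℝ) - 1) / n) = (i : ℝ) / n := by push_cast; ring
  rw [hl, hlen] at h
  have hpos : 0 < 1 / (n : ℝ) := by positivity
  rw [hlen, h _ ⟨by linarith [hy.1], by linarith [hy.2]⟩, h _ ⟨by linarith, by linarith⟩,
    h _ ⟨by linarith, by linarith⟩]
  field_simp
  ring

lemma InMh.deriv_formula {n : ℕ} (hn : 0 < n) {w : ℝ → ℝ} (hw : InMh n w) {i : ℕ} (hi : i < n)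
    {y : ℝ} (hy : y ∈ Set.Ioo (0 : ℝ) (1 / n)) :
    deriv w ((i : ℝ) / n + y) = n * (w (((i + 1 : ℕ) : ℝ) / n) - w ((i : ℝ) / n)) := by
  have h1 : deriv w ((i : ℝ) / n + y) = deriv (fun t => w ((i : ℝ) / n + t)) y :=
    (deriv_comp_const_add w ((i : ℝ) / n) y).symm
  rw [h1]
  have h2 : (fun t => w ((i : ℝ) / n + t)) =ᶠ[nhds y] fun t =>
      w ((i : ℝ) / n) + n * t * (w (((i + 1 : ℕ) : ℝ) / n) - w ((i : ℝ) / n)) := by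
    filter_upwards [Ioo_mem_nhds hy.1 hy.2] with t ht
    exact hw.formula hn hi (Set.Ioo_subset_Icc_self ht)
  rw [h2.deriv_eq]
  simp

lemma bubbleMod_formula {n : ℕ} (hn : 0 < n) (B : ℝ → ℝ) {w : ℝ → ℝ} (hw : InMh n w) {i : ℕ}
    (hi : i < n) {y : ℝ} (hy : y ∈ Set.Ioo (0 : ℝ) (1 / n)) :
    bubbleMod n B w ((i : ℝ) / n + y)
      = w ((i : ℝ) / n) + (w (((i + 1 : ℕ) : ℝ) / n) - w ((i : ℝ) / n)) * (n * y + B y) := by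
  have hn' : (0 : ℝ) < n := by exact_mod_cast hn
  have hy2 : n * y < 1 := by
    have := hy.2; rw [lt_div_iff₀ hn'] at this; linarith
  have hy1 : 0 < n * y := mul_pos hn' hy.1
  have hx : (i : ℝ) / n + y = ((i : ℝ) + n * y) / n := by field_simp
  have hl : ((((i + 1 : ℕ) : ℝ) - 1) / n) = (i : ℝ) / n := by push_cast; ring
  unfold bubbleMod
  rw [hw.formula hn hi (Set.Ioo_subset_Icc_self hy), Finset.sum_eq_single (i + 1)]
  · have hm : (i : ℝ) / n + y ∈
        Set.Icc ((((i + 1 : ℕ) : ℝ) - 1) / n) (((i + 1 : ℕ) : ℝ) / n) := by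
      rw [hx]
      push_cast
      exact ⟨by gcongr; linarith, by gcongr⟩
    rw [bubbleI, if_pos hm, hl, add_sub_cancel_left]
    ring
  · intro j _ hj
    rw [bubbleI, if_neg, mul_zero]
    rintro ⟨h1, h2⟩
    rw [hx, div_le_div_iff_of_pos_right hn'] at h1 h2
    have h3 : i < j := by exact_mod_cast (by linarith : (i : ℝ) < j)
    have h4 : j < i + 2 := by exact_mod_cast (by push_cast; linarith : (j : ℝ) < (i + 2 : ℕ))
    omega
  · intro h
    exact absurd (Finset.mem_Icc.mpr ⟨by omega, by omega⟩) h

lemma bubbleMod_deriv {n : ℕ} (hn : 0 < n) {B B' : ℝ → ℝ}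
    (hB : ∀ x ∈ Set.Icc (0:ℝ) (1 / n), HasDerivWithinAt B (B' x) (Set.Icc 0 (1 / n)) x)
    {w : ℝ → ℝ} (hw : InMh n w) {i : ℕ}
    (hi : i < n) {y : ℝ} (hy : y ∈ Set.Ioo (0 : ℝ) (1 / n)) :
    deriv (bubbleMod n B w) ((i : ℝ) / n + y)
      = (w (((i + 1 : ℕ) : ℝ) / n) - w ((i : ℝ) / n)) * (n + B' y) := by
  rw [← deriv_comp_const_add (bubbleMod n B w) ((i : ℝ) / n) y]
  have h2 : (fun t => bubbleMod n B w ((i : ℝ) / n + t)) =ᶠ[nhds y] fun t =>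
      w ((i : ℝ) / n) + (w (((i + 1 : ℕ) : ℝ) / n) - w ((i : ℝ) / n)) * (n * t + B t) := by
    filter_upwards [Ioo_mem_nhds hy.1 hy.2] with t ht
    exact bubbleMod_formula hn B hw hi ht
  rw [h2.deriv_eq]
  have hBy : HasDerivAt B (B' y) y :=
    (hB y (Set.Ioo_subset_Icc_self hy)).hasDerivAt (Icc_mem_nhds hy.1 hy.2)
  have h3 := ((((hasDerivAt_id y).const_mul (n : ℝ)).add hBy).const_mul
    (w (((i + 1 : ℕ) : ℝ) / n) - w ((i : ℝ) / n))).const_add (w ((i : ℝ) / n))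
  simpa using h3.deriv

/-- The bubble modification does not change nodal values. -/
lemma bubbleMod_node {n : ℕ} (hn : 0 < n) {B : ℝ → ℝ} (hB0 : B 0 = 0) (hBh : B (1 / n) = 0)
    (w : ℝ → ℝ) (k : ℕ) : bubbleMod n B w ((k : ℝ) / n) = w ((k : ℝ) / n) := by
  have hn' : (0 : ℝ) < n := by exact_mod_cast hn
  unfold bubbleMod
  rw [Finset.sum_eq_zero, add_zero]
  intro j _
  rw [bubbleI]
  split_ifs with h
  · obtain ⟨h1, h2⟩ := h
    rw [div_le_div_iff_of_pos_right hn'] at h1 h2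
    have h3 : k ≤ j := by exact_mod_cast h2
    have h4 : j ≤ k + 1 := by exact_mod_cast (by push_cast; linarith : (j : ℝ) ≤ (k + 1 : ℕ))
    rcases (by omega : j = k ∨ j = k + 1) with rfl | rfl
    · rw [show (j : ℝ) / n - ((j : ℝ) - 1) / n = 1 / n by ring, hBh, mul_zero]
    · rw [show (k : ℝ) / n - (((k + 1 : ℕ) : ℝ) - 1) / n = 0 by push_cast; ring, hB0, mul_zero]
  · rw [mul_zero]

/-! ### Realising nodal increments in `M_h` -/

/-- Every family of nodal increments with sum zero is realised by a member of `M_h`, namely by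
a combination of ramps `max 0 (min 1 (n x - j))`. -/
lemma exists_InMh (n : ℕ) (hn : 0 < n) (d : ℕ → ℝ) (hd : ∑ i ∈ Finset.range n, d i = 0) :
    ∃ w, InMh n w ∧
      ∀ i < n, w (((i + 1 : ℕ) : ℝ) / n) - w ((i : ℝ) / n) = d i := by
  have hn' : (0 : ℝ) < n := by exact_mod_cast hn
  have hlo : ∀ t : ℝ, t ≤ 0 → max 0 (min 1 t) = 0 := fun t ht =>
    max_eq_left ((min_le_right _ _).trans ht)
  have hhi : ∀ t : ℝ, 1 ≤ t → max 0 (min 1 t) = 1 := fun t ht => by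
    rw [min_eq_left ht]; simp
  have hmid : ∀ t : ℝ, 0 ≤ t → t ≤ 1 → max 0 (min 1 t) = t := fun t h0 h1 => by
    rw [min_eq_right h1, max_eq_right h0]
  refine ⟨fun x => ∑ j ∈ Finset.range n, d j * max 0 (min 1 (n * x - j)), ⟨?_, ?_, ?_, ?_⟩, ?_⟩
  · fun_prop
  · refine Finset.sum_eq_zero fun j _ => ?_
    rw [hlo, mul_zero]
    have : (0 : ℝ) ≤ j := by positivity
    linarith
  · refine Eq.trans (Finset.sum_congr rfl fun j hj => ?_) hd
    rw [hhi, mul_one]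
    have : ((j + 1 : ℕ) : ℝ) ≤ n := by exact_mod_cast Finset.mem_range.mp hj
    push_cast at this
    linarith
  · intro i hi1 hin
    have key : ∀ j : ℕ, ∃ a c : ℝ, ∀ x ∈ Set.Icc (((i : ℝ) - 1) / n) ((i : ℝ) / n),
        max 0 (min 1 (n * x - j)) = a * x + c := by
      intro j
      have hx : ∀ x ∈ Set.Icc (((i : ℝ) - 1) / n) ((i : ℝ) / n),
          (i : ℝ) - 1 ≤ n * x ∧ n * x ≤ i := by
        rintro x ⟨h1, h2⟩
        rw [div_le_iff₀ hn'] at h1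
        rw [le_div_iff₀ hn'] at h2
        exact ⟨by linarith, by linarith⟩
      rcases lt_trichotomy (j + 1) i with h | h | h
      · have h' : ((j + 2 : ℕ) : ℝ) ≤ i := by exact_mod_cast h
        push_cast at h'
        exact ⟨0, 1, fun x hxx => by rw [hhi _ (by linarith [(hx x hxx).1])]; ring⟩
      · have h' : (j : ℝ) + 1 = i := by exact_mod_cast h
        refine ⟨n, -j, fun x hxx => ?_⟩
        rw [hmid _ (by linarith [(hx x hxx).1]) (by linarith [(hx x hxx).2])]
        ring
      · have h' : (i : ℝ) ≤ j := by exact_mod_cast Nat.lt_succ_iff.mp h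
        exact ⟨0, 0, fun x hxx => by rw [hlo _ (by linarith [(hx x hxx).2])]; ring⟩
    choose a c hac using key
    refine ⟨∑ j ∈ Finset.range n, d j * a j, ∑ j ∈ Finset.range n, d j * c j, fun x hx => ?_⟩
    rw [Finset.sum_mul, ← Finset.sum_add_distrib]
    refine Finset.sum_congr rfl fun j _ => ?_
    rw [hac j x hx]; ring
  · intro i hi
    simp only
    rw [← Finset.sum_sub_distrib, Finset.sum_eq_single i]
    · rw [mul_div_cancel₀ _ hn'.ne', mul_div_cancel₀ _ hn'.ne', hhi _ (by push_cast; linarith),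
        hlo _ (by linarith)]
      ring
    · intro j _ hj
      rw [mul_div_cancel₀ _ hn'.ne', mul_div_cancel₀ _ hn'.ne']
      rcases lt_or_gt_of_ne hj with h | h
      · have h' : ((j + 1 : ℕ) : ℝ) ≤ i := by exact_mod_cast h
        push_cast at h'
        rw [hhi _ (by push_cast; linarith), hhi _ (by linarith), sub_self]
      · have h' : ((i + 1 : ℕ) : ℝ) ≤ j := by exact_mod_cast h
        rw [hlo _ (by linarith), hlo _ (by push_cast at h'; linarith), sub_self]
    · intro h
      exact absurd (Finset.mem_range.mpr hi) h

/-! ### The finite-dimensional extremal problem -/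

/-- The bilinear form in terms of the nodal increments of `W`, by summation by parts. The
mean `s` can be subtracted because the increments of `W` sum to zero. -/
lemma sum_parts (n : ℕ) (U W : ℕ → ℝ) (hU0 : U 0 = 0) (hUn : U n = 0) (hW0 : W 0 = 0)
    (hWn : W n = 0) (ε b s : ℝ) :
    ε * (∑ i ∈ Finset.range n, n * (U (i + 1) - U i) * (W (i + 1) - W i))
      + ∑ i ∈ Finset.range n, (U (i + 1) - U i) *
          (W i + (W (i + 1) - W i) / 2 + b * (W (i + 1) - W i))
    = ∑ i ∈ Finset.range n, (W (i + 1) - W i) *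
        ((ε * n + b) * (U (i + 1) - U i) - ((U i + U (i + 1)) / 2 - s)) := by
  have h1 := Finset.sum_range_sub (fun i => U i * W i) n
  have h2 := Finset.sum_range_sub W n
  simp only [hU0, hUn, hW0, hWn, mul_zero, sub_zero] at h1 h2
  have h3 : ∑ i ∈ Finset.range n, s * (W (i + 1) - W i) = 0 := by
    rw [← Finset.mul_sum, h2, mul_zero]
  rw [Finset.mul_sum, ← Finset.sum_add_distrib, ← sub_eq_zero, ← Finset.sum_sub_distrib]
  rw [show (0 : ℝ) = ∑ i ∈ Finset.range n, (U (i + 1) * W (i + 1) - U i * W i)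
    - ∑ i ∈ Finset.range n, s * (W (i + 1) - W i) by rw [h1, h3, sub_zero],
    ← Finset.sum_sub_distrib]
  exact Finset.sum_congr rfl fun i _ => by ring

/-- The squared length of the Riesz representer of the bilinear form: the mixed terms vanish
since `∑ (U_{i+1} - U_i) (U_i + U_{i+1})` telescopes. -/
lemma sum_sq (n : ℕ) (hn : 0 < n) (U : ℕ → ℝ) (hU0 : U 0 = 0) (hUn : U n = 0) (K s : ℝ)
    (hs : s = 1 / n * ∑ i ∈ Finset.range n, (U i + U (i + 1)) / 2) :
    ∑ i ∈ Finset.range n, (K * (U (i + 1) - U i) - ((U i + U (i + 1)) / 2 - s)) ^ 2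
      = K ^ 2 * ∑ i ∈ Finset.range n, (U (i + 1) - U i) ^ 2
        + (∑ i ∈ Finset.range n, ((U i + U (i + 1)) / 2) ^ 2 - n * s ^ 2) := by
  have hn' : (0 : ℝ) < n := by exact_mod_cast hn
  have h1 := Finset.sum_range_sub (fun i => U i ^ 2) n
  have h2 := Finset.sum_range_sub U n
  simp only [hU0, hUn, sub_zero] at h1 h2
  have hm : ∑ i ∈ Finset.range n, (U i + U (i + 1)) / 2 = n * s := by
    rw [hs]; field_simp
  have : ∀ i, (K * (U (i + 1) - U i) - ((U i + U (i + 1)) / 2 - s)) ^ 2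
      = K ^ 2 * (U (i + 1) - U i) ^ 2 + ((U i + U (i + 1)) / 2) ^ 2
        - K * (U (i + 1) ^ 2 - U i ^ 2) + 2 * K * s * (U (i + 1) - U i)
        - 2 * s * ((U i + U (i + 1)) / 2) + s ^ 2 := fun i => by ring
  simp only [this, Finset.sum_add_distrib, Finset.sum_sub_distrib, ← Finset.mul_sum] at *
  rw [hm, h1, h2]
  simp
  ring

/-- A Cauchy–Schwarz extremiser on the hyperplane `∑ d = 0`: `g` itself, or any nonzero vector
of the hyperplane when `g = 0`. -/
lemma exists_extremal (n : ℕ) (hn : 2 ≤ n) (g : ℕ → ℝ) (hg : ∑ i ∈ Finset.range n, g i = 0) :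
    ∃ d : ℕ → ℝ, ∑ i ∈ Finset.range n, d i = 0 ∧ 0 < ∑ i ∈ Finset.range n, d i ^ 2 ∧
      (∑ i ∈ Finset.range n, d i * g i) ^ 2
        = (∑ i ∈ Finset.range n, d i ^ 2) * ∑ i ∈ Finset.range n, g i ^ 2 := by
  have hnn : 0 ≤ ∑ i ∈ Finset.range n, g i ^ 2 := Finset.sum_nonneg fun i _ => sq_nonneg _
  rcases hnn.eq_or_lt with h | h
  · have hz : ∀ i ∈ Finset.range n, g i = 0 := by
      intro i hi
      have := (Finset.sum_eq_zero_iff_of_nonneg (fun i _ => sq_nonneg (g i))).mp h.symm i hi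
      simpa using this
    obtain ⟨m, rfl⟩ := Nat.exists_eq_add_of_le hn
    refine ⟨fun i => if i = 0 then 1 else if i = 1 then -1 else 0, ?_, ?_, ?_⟩
    · rw [Finset.sum_range_add, Finset.sum_eq_zero (s := Finset.range m)]
      · simp [Finset.sum_range_succ]
      · intro i _
        rw [if_neg (by omega), if_neg (by omega)]
    · refine Finset.sum_pos' (fun i _ => sq_nonneg _) ⟨0, by simp, by simp⟩
    · rw [← h, mul_zero, Finset.sum_eq_zero (fun i hi => by rw [hz i hi, mul_zero])]
      simp
  · refine ⟨g, hg, h, ?_⟩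
    rw [sq]
    simp only [← sq]

/-! ### The discrete optimal trial norm -/

/-- Representation of the square of the discrete optimal trial
norm for the bubble-enriched test space `V_h`:
`sup_{v ∈ V_h, v ≠ 0} (ε∫u_h'v' + ∫u_h'v)²/∫(v')²
  = ((ε + b₁h)²∫(u_h')² + σ(u_h)²)/(1 + b₂)`. -/
theorem stmt13 (n : ℕ) (hn : 2 ≤ n)
    (B B' : ℝ → ℝ) (b₁ b₂ : ℝ) (hb₁ : 0 < b₁) (hb₂ : 0 < b₂)
    (hB : ∀ x ∈ Set.Icc (0:ℝ) (1 / n), HasDerivWithinAt B (B' x) (Set.Icc 0 (1 / n)) x)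
    (hB' : ContinuousOn B' (Set.Icc 0 (1 / n)))
    (hB0 : B 0 = 0) (hBh : B (1 / n) = 0)
    (hBint : ∫ x in (0:ℝ)..(1 / n), B x = b₁ * (1 / n))
    (hB'int : ∫ x in (0:ℝ)..(1 / n), (B' x)^2 = b₂ / (1 / n))
    (ε : ℝ) (hε : 0 < ε)
    (uh : ℝ → ℝ) (huh : InMh n uh) :
    sSup { r : ℝ | ∃ v : ℝ → ℝ,
        (∃ w : ℝ → ℝ, InMh n w ∧ v = bubbleMod n B w) ∧
        (∃ x ∈ Set.Icc (0:ℝ) 1, v x ≠ 0) ∧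
        r = (ε * (∫ x in (0:ℝ)..1, deriv uh x * deriv v x) +
              ∫ x in (0:ℝ)..1, deriv uh x * v x)^2 /
            ∫ x in (0:ℝ)..1, (deriv v x)^2 } =
      ((ε + b₁ * (1 / n))^2 * (∫ x in (0:ℝ)..1, (deriv uh x)^2) + sigmaSq n uh) /
        (1 + b₂) := by
  have hn0 : 0 < n := by omega
  have hn' : (0 : ℝ) < n := by exact_mod_cast hn0
  have hh : (0 : ℝ) ≤ 1 / n := by positivity
  have hBc : ContinuousOn B (Set.Icc 0 (1 / (n : ℝ))) := fun x hx => (hB x hx).continuousWithinAt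
  have hBi : IntervalIntegrable B MeasureTheory.volume 0 (1 / (n : ℝ)) :=
    hBc.intervalIntegrable_of_Icc hh
  have hB'i : IntervalIntegrable B' MeasureTheory.volume 0 (1 / (n : ℝ)) :=
    hB'.intervalIntegrable_of_Icc hh
  have hB'2i : IntervalIntegrable (fun x => B' x ^ 2) MeasureTheory.volume 0 (1 / (n : ℝ)) :=
    (hB'.pow 2).intervalIntegrable_of_Icc hh
  have hB'0 : ∫ x in (0:ℝ)..(1 / n), B' x = 0 := by
    rw [intervalIntegral.integral_eq_sub_of_hasDerivAt_of_le hh hBc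
      (fun x hx => (hB x (Set.Ioo_subset_Icc_self hx)).hasDerivAt (Icc_mem_nhds hx.1 hx.2)) hB'i,
      hB0, hBh, sub_zero]
  have hid : ∫ y in (0:ℝ)..(1 / n), y = (1 / n) ^ 2 / 2 := by
    rw [integral_id]; ring
  have hconst : ∀ c : ℝ, ∫ _y in (0:ℝ)..(1 / n), c = c / n := by
    intro c; rw [intervalIntegral.integral_const, smul_eq_mul]; ring
  have hidi : IntervalIntegrable (fun y : ℝ => y) MeasureTheory.volume 0 (1 / (n : ℝ)) :=
    continuous_id.intervalIntegrable _ _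
  have hci : ∀ c : ℝ, IntervalIntegrable (fun _ : ℝ => c) MeasureTheory.volume 0 (1 / (n : ℝ)) :=
    fun c => continuous_const.intervalIntegrable _ _
  set U : ℕ → ℝ := fun i => uh ((i : ℝ) / n) with hU
  have hnode0 : ∀ w, InMh n w → w (((0 : ℕ) : ℝ) / n) = 0 := by
    intro w hw; simpa using hw.2.1
  have hnoden : ∀ w, InMh n w → w ((n : ℝ) / n) = 0 := by
    intro w hw; rw [div_self hn'.ne']; exact hw.2.2.1
  have hU0 : U 0 = 0 := hnode0 uh huh
  have hUn : U n = 0 := hnoden uh huh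
  have haff : ∀ p q : ℝ, ∫ y in (0:ℝ)..(1 / n), (p + n * y * q) = (p + q / 2) / n := by
    intro p q
    have : ∀ y : ℝ, p + n * y * q = p + (n * q) * y := fun y => by ring
    simp only [this]
    rw [intervalIntegral.integral_add (hci _) (hidi.const_mul _),
      intervalIntegral.integral_const_mul, hid, hconst]
    field_simp
  -- the integrals that involve `uh` only
  have hI1 : ∫ x in (0:ℝ)..1, (deriv uh x) ^ 2
      = n * ∑ i ∈ Finset.range n, (U (i + 1) - U i) ^ 2 := by
    rw [integral_mesh n hn0 _ (fun i _ => (n * (U (i + 1) - U i)) ^ 2)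
      (fun i _ => continuousOn_const)
      (fun i hi y hy => by rw [huh.deriv_formula hn0 hi hy]), Finset.mul_sum]
    refine Finset.sum_congr rfl fun i _ => ?_
    rw [hconst]; field_simp
  have hI2 : ∫ x in (0:ℝ)..1, uh x
      = 1 / n * ∑ i ∈ Finset.range n, (U i + U (i + 1)) / 2 := by
    rw [integral_mesh n hn0 _ (fun i y => U i + n * y * (U (i + 1) - U i))
      (fun i _ => by fun_prop)
      (fun i hi y hy => huh.formula hn0 hi (Set.Ioo_subset_Icc_self hy)), Finset.mul_sum]
    refine Finset.sum_congr rfl fun i _ => ?_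
    rw [haff]; ring
  have hI3 : ∀ i < n, ∫ x in ((i : ℝ) / n)..(((i : ℝ) + 1) / n), uh x
      = (U i + U (i + 1)) / 2 / n := by
    intro i hi
    have h1 := intervalIntegral.integral_comp_add_left (a := 0) (b := 1 / (n : ℝ)) uh
      ((i : ℝ) / n)
    rw [add_zero, show (i : ℝ) / n + 1 / n = ((i : ℝ) + 1) / n by ring] at h1
    rw [← h1]
    have h2 : ∫ y in (0:ℝ)..(1 / n), uh ((i : ℝ) / n + y)
        = ∫ y in (0:ℝ)..(1 / n), (U i + n * y * (U (i + 1) - U i)) := by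
      refine intervalIntegral.integral_congr fun y hy => ?_
      rw [Set.uIcc_of_le hh] at hy
      exact huh.formula hn0 hi hy
    rw [h2, haff]; ring
  set s : ℝ := 1 / n * ∑ i ∈ Finset.range n, (U i + U (i + 1)) / 2 with hs
  have hsig : sigmaSq n uh
      = 1 / n * (∑ i ∈ Finset.range n, ((U i + U (i + 1)) / 2) ^ 2 - n * s ^ 2) := by
    unfold sigmaSq
    rw [hI2, Finset.sum_congr rfl (fun i hi => by
      rw [hI3 i (Finset.mem_range.mp hi), mul_div_cancel₀ _ hn'.ne'])]
    field_simp
  set g : ℕ → ℝ := fun i =>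
    (ε * n + b₁) * (U (i + 1) - U i) - ((U i + U (i + 1)) / 2 - s) with hg
  have hgsum : ∑ i ∈ Finset.range n, g i = 0 := by
    simp only [hg, Finset.sum_sub_distrib, ← Finset.mul_sum]
    rw [← Finset.sum_sub_distrib, Finset.sum_range_sub U n, hU0, hUn]
    have : ∑ i ∈ Finset.range n, (U i + U (i + 1)) / 2 = n * s := by rw [hs]; field_simp
    rw [this]; simp
  have hR : ((ε + b₁ * (1 / n))^2 * (∫ x in (0:ℝ)..1, (deriv uh x)^2) + sigmaSq n uh) /
        (1 + b₂) = (∑ i ∈ Finset.range n, g i ^ 2) / (n * (1 + b₂)) := by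
    rw [hI1, hsig, sum_sq n hn0 U hU0 hUn (ε * n + b₁) s hs]
    field_simp
  -- the quotient as a function of the nodal increments of `w`
  have hQ : ∀ w, InMh n w → ∀ d : ℕ → ℝ,
      (∀ i < n, w (((i + 1 : ℕ) : ℝ) / n) - w ((i : ℝ) / n) = d i) →
      (ε * (∫ x in (0:ℝ)..1, deriv uh x * deriv (bubbleMod n B w) x) +
              ∫ x in (0:ℝ)..1, deriv uh x * bubbleMod n B w x)^2 /
            (∫ x in (0:ℝ)..1, (deriv (bubbleMod n B w) x)^2)
        = (∑ i ∈ Finset.range n, d i * g i) ^ 2 /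
          (n * (1 + b₂) * ∑ i ∈ Finset.range n, d i ^ 2) := by
    intro w hw d hd
    set W : ℕ → ℝ := fun i => w ((i : ℝ) / n) with hW
    have hd' : ∀ i ∈ Finset.range n, d i = W (i + 1) - W i := fun i hi =>
      (hd i (Finset.mem_range.mp hi)).symm
    have e1 : ∫ x in (0:ℝ)..1, deriv uh x * deriv (bubbleMod n B w) x
        = ∑ i ∈ Finset.range n, n * (U (i + 1) - U i) * (W (i + 1) - W i) := by
      rw [integral_mesh n hn0 _
        (fun i y => n * (U (i + 1) - U i) * ((W (i + 1) - W i) * (n + B' y)))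
        (fun i _ => by fun_prop)
        (fun i hi y hy => by rw [huh.deriv_formula hn0 hi hy, bubbleMod_deriv hn0 hB hw hi hy])]
      refine Finset.sum_congr rfl fun i _ => ?_
      rw [intervalIntegral.integral_const_mul, intervalIntegral.integral_const_mul,
        intervalIntegral.integral_add (hci _) hB'i, hconst, hB'0]
      field_simp
      ring
    have e2 : ∫ x in (0:ℝ)..1, deriv uh x * bubbleMod n B w x
        = ∑ i ∈ Finset.range n, (U (i + 1) - U i) *
          (W i + (W (i + 1) - W i) / 2 + b₁ * (W (i + 1) - W i)) := by
      rw [integral_mesh n hn0 _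
        (fun i y => n * (U (i + 1) - U i) * (W i + (W (i + 1) - W i) * (n * y + B y)))
        (fun i _ => by fun_prop)
        (fun i hi y hy => by
          rw [huh.deriv_formula hn0 hi hy, bubbleMod_formula hn0 B hw hi hy])]
      refine Finset.sum_congr rfl fun i _ => ?_
      rw [intervalIntegral.integral_const_mul,
        intervalIntegral.integral_add (hci _) (((hidi.const_mul _).add hBi).const_mul _),
        intervalIntegral.integral_const_mul,
        intervalIntegral.integral_add (hidi.const_mul _) hBi,
        intervalIntegral.integral_const_mul, hid, hBint, hconst]
      field_simp
      ring
    have e3 : ∫ x in (0:ℝ)..1, (deriv (bubbleMod n B w) x) ^ 2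
        = n * (1 + b₂) * ∑ i ∈ Finset.range n, (W (i + 1) - W i) ^ 2 := by
      rw [integral_mesh n hn0 _
        (fun i y => (W (i + 1) - W i) ^ 2 * ((n : ℝ) ^ 2 + ((2 * n) * B' y + B' y ^ 2)))
        (fun i _ => by fun_prop)
        (fun i hi y hy => by rw [bubbleMod_deriv hn0 hB hw hi hy]; ring), Finset.mul_sum]
      refine Finset.sum_congr rfl fun i _ => ?_
      rw [intervalIntegral.integral_const_mul,
        intervalIntegral.integral_add (hci _) ((hB'i.const_mul _).add hB'2i),
        intervalIntegral.integral_add (hB'i.const_mul _) hB'2i,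
        intervalIntegral.integral_const_mul, hB'0, hB'int, hconst]
      field_simp
      ring
    rw [e1, e2, e3, sum_parts n U W hU0 hUn (hnode0 w hw) (hnoden w hw) ε b₁ s]
    congr 2
    · exact Finset.sum_congr rfl fun i hi => by rw [hd' i hi]
    · exact Finset.sum_congr rfl fun i hi => by rw [hd' i hi]
  rw [hR]
  have hc : (0 : ℝ) < n * (1 + b₂) := by positivity
  refine IsGreatest.csSup_eq ⟨?_, ?_⟩
  · obtain ⟨d, hd0, hdpos, hdg⟩ := exists_extremal n hn g hgsum
    obtain ⟨w, hw, hwd⟩ := exists_InMh n hn0 d hd0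
    refine ⟨bubbleMod n B w, ⟨w, hw, rfl⟩, ?_, ?_⟩
    · by_contra! hall
      have hz : ∀ k ≤ n, w ((k : ℝ) / n) = 0 := by
        intro k hk
        rw [← bubbleMod_node hn0 hB0 hBh w k]
        refine hall _ ⟨by positivity, ?_⟩
        rw [div_le_one hn']
        exact_mod_cast hk
      refine hdpos.ne' (Finset.sum_eq_zero fun i hi => ?_)
      have hi' := Finset.mem_range.mp hi
      rw [← hwd i hi', hz _ hi', hz _ hi'.le]
      simp
    · rw [hQ w hw d hwd, hdg]
      field_simp
  · rintro r ⟨v, ⟨w, hw, rfl⟩, -, rfl⟩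
    rw [hQ w hw (fun i => w (((i + 1 : ℕ) : ℝ) / n) - w ((i : ℝ) / n)) (fun i _ => rfl)]
    have hCS := Finset.sum_mul_sq_le_sq_mul_sq (Finset.range n)
      (fun i : ℕ => w (((i + 1 : ℕ) : ℝ) / n) - w ((i : ℝ) / n)) g
    refine div_le_of_le_mul₀ (mul_nonneg hc.le (Finset.sum_nonneg fun i _ => sq_nonneg _))
      (div_nonneg (Finset.sum_nonneg fun i _ => sq_nonneg _) hc.le) (hCS.trans_eq ?_)
    field_simp
end
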